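/- arXiv:2412.05906 — 12 statements merged into one kernel-verified Lean document; each statement's English description precedes it below -/
import Mathlib

section
/- Let (Ω, F, ℙ) be a probability space carrying real random variables w_x, w_y with E[w_x] = E[w_y] = 0, E[w_x^2] = E[w_y^2] = 1 and E[w_x w_y] = ρ, and a real random variable u with E[u^2] < ∞ that is independent of the pair (w_x, w_y). Fix reals A, B, C, D, Ā, C̄ and x, y ∈ ℝ, let P be a symmetric real 2×2 matrix, and set X₁ = A x + B u + (C x + D u) w_x and Y₁ = Ā y + C̄ y w_y. Then E[(X₁, Y₁) P (X₁, Y₁)ᵀ] = (x, y) F (x, y)ᵀ + 2 (H · (x, y)) E[u] + G E[u^2], where F is the symmetric 2×2 matrix with F₁₁ = (A² + C²) P₁₁, F₁₂ = F₂₁ = (A Ā + ρ C C̄) P₁₂, F₂₂ = (Ā² + C̄²) P₂₂; H = ((A B + C D) P₁₁, (Ā B + ρ C̄ D) P₂₁) ∈ ℝ²; and G = (B² + D²) P₁₁. -/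
open MeasureTheory ProbabilityTheory Matrix

/-- A quadratic polynomial in `u` times an integrable function of an independent `w`. -/
theorem quad_mul_indep {Ω : Type*} [MeasurableSpace Ω] (μ : Measure Ω) [IsProbabilityMeasure μ]
    (u : Ω → ℝ) (w : Ω → ℝ × ℝ) (hu1 : Integrable u μ)
    (hu2 : Integrable (fun ω => (u ω) ^ 2) μ) (hindep : IndepFun u w μ)
    (h : ℝ × ℝ → ℝ) (hm : Measurable h) (hi : Integrable (fun ω => h (w ω)) μ) (a b c : ℝ) :
    Integrable (fun ω => (a + b * u ω + c * (u ω) ^ 2) * h (w ω)) μ ∧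
    ∫ ω, (a + b * u ω + c * (u ω) ^ 2) * h (w ω) ∂μ
      = (a + b * (∫ ω, u ω ∂μ) + c * ∫ ω, (u ω) ^ 2 ∂μ) * ∫ ω, h (w ω) ∂μ := by
  have hI : IndepFun (fun ω => a + b * u ω + c * (u ω) ^ 2) (fun ω => h (w ω)) μ :=
    hindep.comp (φ := fun t : ℝ => a + b * t + c * t ^ 2) (ψ := h) (by fun_prop) hm
  have i1 : Integrable (fun ω => a + b * u ω) μ := (integrable_const a).add (hu1.const_mul b)
  have i2 : Integrable (fun ω => a + b * u ω + c * (u ω) ^ 2) μ := i1.add (hu2.const_mul c)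
  refine ⟨hI.integrable_mul i2 hi, ?_⟩
  have e := hI.integral_fun_mul_eq_mul_integral i2.aestronglyMeasurable hi.aestronglyMeasurable
  rw [e, integral_add i1 (hu2.const_mul c),
    integral_add (integrable_const a) (hu1.const_mul b), integral_const_mul, integral_const_mul]
  simp

/-- One-step expectation of a quadratic form under the linear state dynamics
`X₁ = A x + B u + (C x + D u) w_x`, `Y₁ = Ā y + C̄ y w_y`, where the noises `w_x, w_y`
have mean 0, variance 1 and correlation `ρ`, and the (square-integrable) control `u` is
independent of the noise pair. -/
theorem stmt_1 {Ω : Type*} [MeasurableSpace Ω] (μ : Measure Ω) [IsProbabilityMeasure μ]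
    (wx wy u : Ω → ℝ) (hwxm : Measurable wx) (hwym : Measurable wy) (hum : Measurable u)
    (hwx2 : Integrable (fun ω => (wx ω) ^ 2) μ)
    (hwy2 : Integrable (fun ω => (wy ω) ^ 2) μ)
    (hu2 : Integrable (fun ω => (u ω) ^ 2) μ)
    (hwx0 : ∫ ω, wx ω ∂μ = 0) (hwy0 : ∫ ω, wy ω ∂μ = 0)
    (hwxv : ∫ ω, (wx ω) ^ 2 ∂μ = 1) (hwyv : ∫ ω, (wy ω) ^ 2 ∂μ = 1)
    (ρ : ℝ) (hρ : ∫ ω, wx ω * wy ω ∂μ = ρ)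
    (hindep : IndepFun u (fun ω => (wx ω, wy ω)) μ)
    (A B C D Abar Cbar x y : ℝ)
    (P : Matrix (Fin 2) (Fin 2) ℝ) (hP : P.IsSymm) :
    (∫ ω, ![A * x + B * u ω + (C * x + D * u ω) * wx ω,
            Abar * y + Cbar * y * wy ω] ⬝ᵥ
          (P *ᵥ ![A * x + B * u ω + (C * x + D * u ω) * wx ω,
                  Abar * y + Cbar * y * wy ω]) ∂μ)
      = ![x, y] ⬝ᵥ
          ((!![(A ^ 2 + C ^ 2) * P 0 0, (A * Abar + ρ * C * Cbar) * P 0 1;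
              (A * Abar + ρ * C * Cbar) * P 0 1, (Abar ^ 2 + Cbar ^ 2) * P 1 1]) *ᵥ ![x, y])
        + 2 * (![(A * B + C * D) * P 0 0, (Abar * B + ρ * Cbar * D) * P 1 0] ⬝ᵥ ![x, y])
            * (∫ ω, u ω ∂μ)
        + ((B ^ 2 + D ^ 2) * P 0 0) * (∫ ω, (u ω) ^ 2 ∂μ) := by
  have mx : MemLp wx 2 μ := (memLp_two_iff_integrable_sq hwxm.aestronglyMeasurable).2 hwx2
  have my : MemLp wy 2 μ := (memLp_two_iff_integrable_sq hwym.aestronglyMeasurable).2 hwy2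
  have mu : MemLp u 2 μ := (memLp_two_iff_integrable_sq hum.aestronglyMeasurable).2 hu2
  have hu1 : Integrable u μ := mu.integrable (by norm_num)
  have hx1 : Integrable wx μ := mx.integrable (by norm_num)
  have hy1 : Integrable wy μ := my.integrable (by norm_num)
  have hxy : Integrable (fun ω => wx ω * wy ω) μ := mx.integrable_mul my
  have hs : P 1 0 = P 0 1 := hP.apply 0 1
  have key := quad_mul_indep μ u (fun ω => (wx ω, wy ω)) hu1 hu2 hindep
  obtain ⟨i0, e0⟩ := key (fun _ => 1) (by fun_prop) (integrable_const _)
    (P 0 0 * A ^ 2 * x ^ 2 + 2 * P 0 1 * A * x * Abar * y + P 1 1 * Abar ^ 2 * y ^ 2)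
    (2 * P 0 0 * A * B * x + 2 * P 0 1 * B * Abar * y) (P 0 0 * B ^ 2)
  obtain ⟨i1, e1⟩ := key (fun p => p.1) (by fun_prop) hx1
    (2 * P 0 0 * A * C * x ^ 2 + 2 * P 0 1 * C * x * Abar * y)
    (2 * P 0 0 * (A * D + B * C) * x + 2 * P 0 1 * D * Abar * y) (2 * P 0 0 * B * D)
  obtain ⟨i2, e2⟩ := key (fun p => p.2) (by fun_prop) hy1
    (2 * P 0 1 * A * x * Cbar * y + 2 * P 1 1 * Abar * Cbar * y ^ 2)
    (2 * P 0 1 * B * Cbar * y) 0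
  obtain ⟨i3, e3⟩ := key (fun p => p.1 ^ 2) (by fun_prop) hwx2
    (P 0 0 * C ^ 2 * x ^ 2) (2 * P 0 0 * C * D * x) (P 0 0 * D ^ 2)
  obtain ⟨i4, e4⟩ := key (fun p => p.1 * p.2) (by fun_prop) hxy
    (2 * P 0 1 * C * x * Cbar * y) (2 * P 0 1 * D * Cbar * y) 0
  obtain ⟨i5, e5⟩ := key (fun p => p.2 ^ 2) (by fun_prop) hwy2
    (P 1 1 * Cbar ^ 2 * y ^ 2) 0 0
  have E := integral_add' (((((i0.add i1).add i2).add i3).add i4)) i5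
  rw [integral_add' ((((i0.add i1).add i2).add i3)) i4, integral_add' ((i0.add i1).add i2) i3,
    integral_add' (i0.add i1) i2, integral_add' i0 i1, e0, e1, e2, e3, e4, e5] at E
  simp only [hwx0, hwy0, hwxv, hwyv, hρ, integral_const, probReal_univ, smul_eq_mul] at E
  refine Eq.trans (Eq.trans (integral_congr_ae (Filter.Eventually.of_forall fun ω => ?_)) E) ?_
  · simp [Matrix.mulVec, dotProduct, Fin.sum_univ_two, hs]
    ring
  · simp [Matrix.mulVec, dotProduct, Fin.sum_univ_two, hs]
    ring
end

section
/- Let m ≥ 1, let G be a symmetric positive-definite m×m real matrix, b ∈ ℝ^m and λ > 0. For every measurable probability density π : ℝ^m → [0, ∞) with ∫ ‖u‖² π(u) du < ∞ and ∫ π(u) |ln π(u)| du < ∞, one has ∫_{ℝ^m} (2 b·u + uᵀ G u) π(u) du + λ ∫_{ℝ^m} π(u) ln π(u) du ≥ −bᵀ G⁻¹ b + (λ/2) ln((1/(πλ))^m det G), and equality holds when π is the density of the multivariate normal distribution with mean −G⁻¹ b and covariance matrix (λ/2) G⁻¹. -/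
open MeasureTheory Matrix

/-- Density of the multivariate normal distribution on `ℝ^m` with mean `μ` and
(positive-definite) covariance matrix `S`. -/
noncomputable def mvGaussianDensity (m : ℕ) (μ : Fin m → ℝ)
    (S : Matrix (Fin m) (Fin m) ℝ) : (Fin m → ℝ) → ℝ := fun u =>
  (Real.sqrt ((2 * Real.pi) ^ m * S.det))⁻¹ *
    Real.exp (-(1 / 2) * ((u - μ) ⬝ᵥ (S⁻¹ *ᵥ (u - μ))))

lemma aux_exists (m : ℕ) (G : Matrix (Fin m) (Fin m) ℝ) (hG : G.PosDef) :
    ∃ B : Matrix (Fin m) (Fin m) ℝ, G = Bᵀ * B := by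
  open scoped MatrixOrder in
  obtain ⟨B, hB⟩ := CStarAlgebra.nonneg_iff_eq_star_mul_self.mp hG.posSemidef.nonneg
  refine ⟨B, ?_⟩
  rw [hB, star_eq_conjTranspose, conjTranspose_eq_transpose_of_trivial]

lemma aux_gauss (m : ℕ) (G : Matrix (Fin m) (Fin m) ℝ) (hG : G.PosDef) (k : ℝ) (hk : 0 < k)
    (a : Fin m → ℝ) :
    Integrable (fun u : Fin m → ℝ => Real.exp (-k * ((u - a) ⬝ᵥ (G *ᵥ (u - a))))) ∧
    ∫ u : Fin m → ℝ, Real.exp (-k * ((u - a) ⬝ᵥ (G *ᵥ (u - a))))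
      = Real.sqrt ((Real.pi / k) ^ m / G.det) := by
  obtain ⟨B, hB⟩ := aux_exists m G hG
  have hdet : G.det = B.det ^ 2 := by rw [hB, det_mul, det_transpose, sq]
  have hdG := hG.det_pos
  have hB0 : B.det ≠ 0 := by
    intro h; rw [hdet, h] at hdG; simp at hdG
  let f : (Fin m → ℝ) → ℝ := fun v => ∏ i, Real.exp (-k * v i ^ 2)
  have hfc : Continuous f := by fun_prop
  have hfi : Integrable f :=
    Integrable.fintype_prod (f := fun _ x => Real.exp (-k * x ^ 2))
      (fun _ => integrable_exp_neg_mul_sq hk)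
  have hf : ∫ v, f v = Real.sqrt (Real.pi / k) ^ m := by
    have := integral_fintype_prod_volume_eq_prod (ι := Fin m) (𝕜 := ℝ) (fun _ x => Real.exp (-k * x ^ 2))
    simp only [integral_gaussian, Finset.prod_const, Finset.card_univ, Fintype.card_fin] at this
    exact this
  have hfe : ∀ u, Real.exp (-k * (u ⬝ᵥ (G *ᵥ u))) = f (toLin' B u) := by
    intro u
    simp only [f]
    rw [← Real.exp_sum, ← Finset.mul_sum, hB, ← mulVec_mulVec, dotProduct_mulVec, vecMul_transpose]
    simp [dotProduct, sq]
  have hmap := Real.map_matrix_volume_pi_eq_smul_volume_pi hB0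
  have hm : Measurable (toLin' B) := (LinearMap.continuous_of_finiteDimensional _).measurable
  have hI : Integrable (fun u => f (toLin' B u)) := by
    have : Integrable f (Measure.map (toLin' B) volume) := by
      rw [hmap]; exact hfi.smul_measure ENNReal.ofReal_ne_top
    exact this.comp_measurable hm
  have hV : ∫ u, f (toLin' B u) = Real.sqrt ((Real.pi / k) ^ m / G.det) := by
    rw [← integral_map hm.aemeasurable hfc.aestronglyMeasurable, hmap, integral_smul_measure, hf,
      ENNReal.toReal_ofReal (abs_nonneg _), hdet, Real.sqrt_div (x := (Real.pi / k) ^ m) (by positivity), Real.sqrt_sq_eq_abs,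
      smul_eq_mul, abs_inv]
    have : Real.sqrt (Real.pi / k) ^ m = Real.sqrt ((Real.pi / k) ^ m) := by
      rw [eq_comm, Real.sqrt_eq_iff_mul_self_eq (by positivity) (by positivity), ← mul_pow,
        Real.mul_self_sqrt (by positivity)]
    rw [this]; ring
  simp only [hfe]
  exact ⟨hI.comp_sub_right a, by
    rw [integral_sub_right_eq_self (μ := volume) (fun u => f (toLin' B u)) a, hV]⟩

lemma aux_cost_integrable (m : ℕ) (G : Matrix (Fin m) (Fin m) ℝ) (b : Fin m → ℝ)
    (p : (Fin m → ℝ) → ℝ) (hp : Measurable p) (hp0 : ∀ u, 0 ≤ p u) (hpi : Integrable p)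
    (h2 : Integrable (fun u => (∑ i, (u i) ^ 2) * p u)) :
    Integrable (fun u => (2 * (b ⬝ᵥ u) + u ⬝ᵥ (G *ᵥ u)) * p u) := by
  have hle : ∀ (u : Fin m → ℝ) i, u i ^ 2 ≤ ∑ j, u j ^ 2 := fun u i =>
    Finset.single_le_sum (f := fun j => u j ^ 2) (fun j _ => sq_nonneg _) (Finset.mem_univ i)
  have h1 : ∀ i, Integrable (fun u : Fin m → ℝ => u i * p u) := by
    intro i
    refine (hpi.add h2).mono' (by fun_prop) (Filter.Eventually.of_forall fun u => ?_)
    rw [norm_mul, Real.norm_of_nonneg (hp0 u), Real.norm_eq_abs]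
    have : |u i| ≤ 1 + ∑ j, u j ^ 2 := by
      have := hle u i
      rw [← sq_abs] at this
      nlinarith [sq_nonneg (|u i| - 1)]
    calc _ ≤ (1 + ∑ j, u j ^ 2) * p u := mul_le_mul_of_nonneg_right this (hp0 u)
      _ = _ := by simp only [Pi.add_apply]; ring
  have h3 : ∀ i j, Integrable (fun u : Fin m → ℝ => u i * u j * p u) := by
    intro i j
    refine h2.mono' (by fun_prop) (Filter.Eventually.of_forall fun u => ?_)
    rw [norm_mul, Real.norm_of_nonneg (hp0 u), Real.norm_eq_abs]
    refine mul_le_mul_of_nonneg_right ?_ (hp0 u)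
    rw [abs_le]
    constructor <;> nlinarith [hle u i, hle u j, sq_nonneg (u i - u j), sq_nonneg (u i + u j)]
  have : (fun u : Fin m → ℝ => (2 * (b ⬝ᵥ u) + u ⬝ᵥ (G *ᵥ u)) * p u) = fun u =>
      (∑ i, (2 * b i) * (u i * p u)) + ∑ i, ∑ j, G i j * (u i * u j * p u) := by
    funext u
    simp only [dotProduct, mulVec, add_mul, Finset.mul_sum, Finset.sum_mul]
    congr 1
    · exact Finset.sum_congr rfl fun i _ => by ring
    · exact Finset.sum_congr rfl fun i _ => Finset.sum_congr rfl fun j _ => by ring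
  rw [this]
  refine (integrable_finsetSum _ fun i _ => (h1 i).const_mul _).add
    (integrable_finsetSum _ fun i _ => integrable_finsetSum _ fun j _ => (h3 i j).const_mul _)

lemma aux_square (m : ℕ) (G : Matrix (Fin m) (Fin m) ℝ)
    (hGsymm : G.IsSymm) (hGpd : G.PosDef) (b u : Fin m → ℝ) :
    2 * (b ⬝ᵥ u) + u ⬝ᵥ (G *ᵥ u) =
      (u - -(G⁻¹ *ᵥ b)) ⬝ᵥ (G *ᵥ (u - -(G⁻¹ *ᵥ b))) - b ⬝ᵥ (G⁻¹ *ᵥ b) := by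
  have hu : IsUnit G.det := hGpd.det_pos.ne'.isUnit
  have h1 : G *ᵥ (G⁻¹ *ᵥ b) = b := by rw [mulVec_mulVec, mul_nonsing_inv _ hu, one_mulVec]
  have h2 : (G⁻¹ *ᵥ b) ⬝ᵥ (G *ᵥ u) = b ⬝ᵥ u := by
    rw [dotProduct_mulVec, ← mulVec_transpose, hGsymm.eq, h1]
  rw [sub_neg_eq_add, mulVec_add, h1, add_dotProduct, dotProduct_add, dotProduct_add, h2,
    dotProduct_comm u b, dotProduct_comm (G⁻¹ *ᵥ b) b]
  ring

lemma aux_density (m : ℕ) (G : Matrix (Fin m) (Fin m) ℝ)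
    (hGpd : G.PosDef) (a : Fin m → ℝ) (lam : ℝ) (hlam : 0 < lam) (u : Fin m → ℝ) :
    mvGaussianDensity m a ((lam / 2) • G⁻¹) u =
      (Real.sqrt ((Real.pi * lam) ^ m / G.det))⁻¹ *
        Real.exp (-(1 / lam) * ((u - a) ⬝ᵥ (G *ᵥ (u - a)))) := by
  have hu : IsUnit G.det := hGpd.det_pos.ne'.isUnit
  have hinv : ((lam / 2) • G⁻¹)⁻¹ = (2 / lam) • G := by
    apply inv_eq_right_inv
    rw [smul_mul_smul_comm, nonsing_inv_mul _ hu]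
    have : lam / 2 * (2 / lam) = 1 := by field_simp
    rw [this, one_smul]
  unfold mvGaussianDensity
  rw [hinv, det_smul, Fintype.card_fin, det_nonsing_inv, Ring.inverse_eq_inv', smul_mulVec,
    dotProduct_smul, smul_eq_mul]
  have e1 : (2 * Real.pi) ^ m * ((lam / 2) ^ m * G.det⁻¹) = (Real.pi * lam) ^ m / G.det := by
    rw [← mul_assoc, ← mul_pow,
      show 2 * Real.pi * (lam / 2) = Real.pi * lam by ring, div_eq_mul_inv]
  have e2 : ∀ t : ℝ, -(1 / 2) * (2 / lam * t) = -(1 / lam) * t := fun t => by ring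
  rw [e1, e2]

/-- Multivariate Gibbs variational principle: for a symmetric positive-definite `G`,
`b ∈ ℝ^m` and `λ > 0`, every probability density `p` on `ℝ^m` with finite second moment
and finite entropy integral satisfies
`∫ (2 b·u + uᵀGu) p du + λ ∫ p ln p du ≥ −bᵀG⁻¹b + (λ/2) ln((1/(πλ))^m det G)`,
with equality for the Gaussian density with mean `−G⁻¹b` and covariance `(λ/2)G⁻¹`. -/
theorem stmt_6 (m : ℕ) (hm : 1 ≤ m) (G : Matrix (Fin m) (Fin m) ℝ)
    (hGsymm : G.IsSymm) (hGpd : G.PosDef) (b : Fin m → ℝ) (lam : ℝ) (hlam : 0 < lam) :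
    (∀ p : (Fin m → ℝ) → ℝ, Measurable p → (∀ u, 0 ≤ p u) →
      (∫ u, p u) = 1 →
      Integrable (fun u => (∑ i, (u i) ^ 2) * p u) →
      Integrable (fun u => p u * |Real.log (p u)|) →
      (∫ u, (2 * (b ⬝ᵥ u) + u ⬝ᵥ (G *ᵥ u)) * p u) + lam * ∫ u, p u * Real.log (p u)
        ≥ -(b ⬝ᵥ (G⁻¹ *ᵥ b))
          + (lam / 2) * Real.log ((1 / (Real.pi * lam)) ^ m * G.det))
    ∧
    ((∫ u, (2 * (b ⬝ᵥ u) + u ⬝ᵥ (G *ᵥ u))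
          * mvGaussianDensity m (-(G⁻¹ *ᵥ b)) ((lam / 2) • G⁻¹) u)
        + lam * ∫ u, mvGaussianDensity m (-(G⁻¹ *ᵥ b)) ((lam / 2) • G⁻¹) u
            * Real.log (mvGaussianDensity m (-(G⁻¹ *ᵥ b)) ((lam / 2) • G⁻¹) u)
      = -(b ⬝ᵥ (G⁻¹ *ᵥ b))
        + (lam / 2) * Real.log ((1 / (Real.pi * lam)) ^ m * G.det)) := by
  set a : Fin m → ℝ := -(G⁻¹ *ᵥ b) with ha
  set q := mvGaussianDensity m a ((lam / 2) • G⁻¹) with hq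
  set c : (Fin m → ℝ) → ℝ := fun u => 2 * (b ⬝ᵥ u) + u ⬝ᵥ (G *ᵥ u) with hc
  set Q : (Fin m → ℝ) → ℝ := fun u => (u - a) ⬝ᵥ (G *ᵥ (u - a)) with hQ
  set Z := Real.sqrt ((Real.pi * lam) ^ m / G.det) with hZ
  set K := -(b ⬝ᵥ (G⁻¹ *ᵥ b)) + (lam / 2) * Real.log ((1 / (Real.pi * lam)) ^ m * G.det) with hK
  have hdG := hGpd.det_pos
  have hpi := Real.pi_pos
  have hZ0 : 0 < Z := Real.sqrt_pos.mpr (by positivity)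
  have hqe : ∀ u, q u = Z⁻¹ * Real.exp (-(1 / lam) * Q u) :=
    fun u => aux_density m G hGpd a lam hlam u
  have hcQ : ∀ u, c u = Q u - b ⬝ᵥ (G⁻¹ *ᵥ b) := fun u => aux_square m G hGsymm hGpd b u
  have hq0 : ∀ u, 0 < q u := fun u => by rw [hqe]; positivity
  have hlogZ : Real.log ((1 / (Real.pi * lam)) ^ m * G.det) = -2 * Real.log Z := by
    have : (1 / (Real.pi * lam)) ^ m * G.det = ((Real.pi * lam) ^ m / G.det)⁻¹ := by
      rw [inv_div, one_div, inv_pow]; ring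
    rw [this, Real.log_inv, hZ, Real.log_sqrt (by positivity)]; ring
  have hlogq : ∀ u, lam * Real.log (q u) = K - c u := by
    intro u
    rw [hqe, Real.log_mul (by positivity) (by positivity), Real.log_exp, Real.log_inv, hK, hlogZ,
      hcQ]
    field_simp
    ring
  obtain ⟨hgi, hgv⟩ := aux_gauss m G hGpd (1 / lam) (by positivity) a
  obtain ⟨hgi2, -⟩ := aux_gauss m G hGpd (1 / (2 * lam)) (by positivity) a
  have hqi : Integrable q := by
    have : q = fun u => Z⁻¹ * Real.exp (-(1 / lam) * Q u) := funext hqe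
    rw [this]; exact hgi.const_mul _
  have hqv : ∫ u, q u = 1 := by
    simp only [hqe]
    rw [integral_const_mul, hgv, div_div_eq_mul_div, div_one]
    exact inv_mul_cancel₀ hZ0.ne'
  have hQ0 : ∀ u, 0 ≤ Q u := fun u => by
    have := hGpd.posSemidef.dotProduct_mulVec_nonneg (u - a)
    rwa [star_trivial] at this
  have hQc : Continuous Q := by
    simp only [hQ]
    fun_prop
  have hQq : Integrable (fun u => Q u * q u) := by
    refine (hgi2.const_mul (2 * lam * Z⁻¹)).mono' (hQc.aestronglyMeasurable.mul hqi.1)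
      (Filter.Eventually.of_forall fun u => ?_)
    rw [Real.norm_of_nonneg (mul_nonneg (hQ0 u) (hq0 u).le), hqe]
    change _ ≤ 2 * lam * Z⁻¹ * Real.exp (-(1 / (2 * lam)) * Q u)
    have e1 : -(1 / lam) * Q u = -(1 / (2 * lam)) * Q u + -(1 / (2 * lam)) * Q u := by
      field_simp; ring
    have h1 : Q u * Real.exp (-(1 / (2 * lam)) * Q u) ≤ 2 * lam := by
      have h := Real.add_one_le_exp (1 / (2 * lam) * Q u)
      have h' : Q u ≤ 2 * lam * Real.exp (1 / (2 * lam) * Q u) := by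
        have : Q u = 2 * lam * (1 / (2 * lam) * Q u) := by field_simp
        nlinarith
      rw [neg_mul, Real.exp_neg, ← div_eq_mul_inv, div_le_iff₀ (Real.exp_pos _)]
      exact h'
    rw [e1, Real.exp_add]
    calc _ = Z⁻¹ * Real.exp (-(1 / (2 * lam)) * Q u) *
          (Q u * Real.exp (-(1 / (2 * lam)) * Q u)) := by ring
      _ ≤ Z⁻¹ * Real.exp (-(1 / (2 * lam)) * Q u) * (2 * lam) :=
          mul_le_mul_of_nonneg_left h1 (by positivity)
      _ = _ := by ring
  have hcq : Integrable (fun u => c u * q u) := by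
    simp only [hcQ, sub_mul]
    exact hQq.sub (hqi.const_mul _)
  constructor
  · intro p hp hp0 hp1 h2 hent
    have hpI : Integrable p := by
      by_contra h
      rw [integral_undef h] at hp1
      exact zero_ne_one hp1
    have hcp : Integrable (fun u => c u * p u) :=
      aux_cost_integrable m G b p hp hp0 hpI h2
    have hplog : Integrable (fun u => p u * Real.log (p u)) := by
      refine hent.mono' (by fun_prop) (Filter.Eventually.of_forall fun u => ?_)
      rw [norm_mul, Real.norm_of_nonneg (hp0 u), Real.norm_eq_abs]
    have hpt : ∀ u, K * p u + lam * (p u - q u) ≤ c u * p u + lam * (p u * Real.log (p u)) := by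
      intro u
      rcases (hp0 u).eq_or_lt with h | h
      · rw [← h]; have := hq0 u; simp; positivity
      · have h3 := Real.log_le_sub_one_of_pos (div_pos (hq0 u) h)
        rw [Real.log_div (hq0 u).ne' h.ne'] at h3
        have h4 : p u * (Real.log (q u) - Real.log (p u)) ≤ q u - p u := by
          have := mul_le_mul_of_nonneg_left h3 h.le
          rwa [mul_sub (p u) (q u / p u), mul_div_cancel₀ _ h.ne', mul_one] at this
        have h5 := mul_le_mul_of_nonneg_left h4 hlam.le
        have h6 : lam * Real.log (q u) * p u = (K - c u) * p u := by rw [hlogq]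
        nlinarith
    have hL : ∫ u, (K * p u + lam * (p u - q u)) = K := by
      have hpq : Integrable (fun u => p u - q u) := hpI.sub hqi
      rw [integral_add (hpI.const_mul _) (hpq.const_mul _), integral_const_mul,
        integral_const_mul, integral_sub hpI hqi, hp1, hqv]
      ring
    have hm := integral_mono ((hpI.const_mul K).add ((hpI.sub hqi).const_mul lam))
      (hcp.add (hplog.const_mul lam)) hpt
    have hR := integral_add hcp (hplog.const_mul lam)
    rw [integral_const_mul] at hR
    have hm' : K ≤ ∫ u, (c u * p u + lam * (p u * Real.log (p u))) := by
      rw [← hL]; exact hm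
    rw [hR] at hm'
    exact hm'
  · have h1 : (fun u => lam * (q u * Real.log (q u))) = fun u => K * q u - c u * q u := by
      funext u
      rw [← sub_mul, ← hlogq]; ring
    rw [← integral_const_mul, h1, integral_sub (hqi.const_mul _) hcq, integral_const_mul, hqv]
    ring
end

section
/- Let λ > 0, G > 0 and h ∈ ℝ. For all μ ∈ ℝ and σ > 0, 2 h μ + G (μ² + σ²) − (λ/2) ln(2πσ²) − λ/2 ≥ −h²/G + (λ/2) ln(G/(πλ)), with equality if and only if μ = −h/G and σ² = λ/(2G). -/
/-- Within the Gaussian family `N(μ, σ²)`, the entropy-regularized quadratic objective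
`2hμ + G(μ² + σ²) − (λ/2)ln(2πσ²) − λ/2` is bounded below by
`−h²/G + (λ/2)ln(G/(πλ))`, with equality iff `μ = −h/G` and `σ² = λ/(2G)`. -/
theorem stmt_7 (lam G h : ℝ) (hlam : 0 < lam) (hG : 0 < G) :
    ∀ μ σ : ℝ, 0 < σ →
      (2 * h * μ + G * (μ ^ 2 + σ ^ 2)
            - (lam / 2) * Real.log (2 * Real.pi * σ ^ 2) - lam / 2
          ≥ -h ^ 2 / G + (lam / 2) * Real.log (G / (Real.pi * lam)))
      ∧ (2 * h * μ + G * (μ ^ 2 + σ ^ 2)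
              - (lam / 2) * Real.log (2 * Real.pi * σ ^ 2) - lam / 2
            = -h ^ 2 / G + (lam / 2) * Real.log (G / (Real.pi * lam))
          ↔ μ = -h / G ∧ σ ^ 2 = lam / (2 * G)) := by
  intro μ σ hσ
  have hpi := Real.pi_pos
  have hx : 0 < 2 * G * σ ^ 2 / lam := by positivity
  have hlog : Real.log (2 * G * σ ^ 2 / lam)
      = Real.log (2 * Real.pi * σ ^ 2) + Real.log (G / (Real.pi * lam)) := by
    rw [← Real.log_mul (by positivity) (by positivity)]
    congr 1
    field_simp
  have key : 2 * h * μ + G * (μ ^ 2 + σ ^ 2)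
        - (lam / 2) * Real.log (2 * Real.pi * σ ^ 2) - lam / 2
      - (-h ^ 2 / G + (lam / 2) * Real.log (G / (Real.pi * lam)))
      = G * (μ + h / G) ^ 2 + (lam / 2) * (2 * G * σ ^ 2 / lam - 1
        - Real.log (2 * G * σ ^ 2 / lam)) := by
    rw [hlog]
    field_simp
    ring
  have h1 : 0 ≤ G * (μ + h / G) ^ 2 := by positivity
  have h2 : 0 ≤ (lam / 2) * (2 * G * σ ^ 2 / lam - 1
        - Real.log (2 * G * σ ^ 2 / lam)) :=
    mul_nonneg (by positivity) (by linarith [Real.log_le_sub_one_of_pos hx])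
  refine ⟨by linarith, ?_, ?_⟩
  · intro heq
    have e1 : G * (μ + h / G) ^ 2 = 0 := by linarith
    have e2 : (lam / 2) * (2 * G * σ ^ 2 / lam - 1
        - Real.log (2 * G * σ ^ 2 / lam)) = 0 := by linarith
    constructor
    · have e3 : μ + h / G = 0 := by
        rcases mul_eq_zero.mp e1 with h0 | h0
        · exact absurd h0 hG.ne'
        · exact pow_eq_zero_iff (two_ne_zero) |>.mp h0
      rw [neg_div]
      linarith
    · have e4 : 2 * G * σ ^ 2 / lam - 1 - Real.log (2 * G * σ ^ 2 / lam) = 0 := by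
        rcases mul_eq_zero.mp e2 with h0 | h0
        · linarith
        · exact h0
      have e5 : 2 * G * σ ^ 2 / lam = 1 := by
        by_contra hne
        linarith [Real.log_lt_sub_one_of_pos hx hne]
      rw [div_eq_one_iff_eq hlam.ne'] at e5
      rw [eq_div_iff (by positivity)]
      linarith
  · rintro ⟨hm, hs⟩
    have e3 : μ + h / G = 0 := by rw [hm]; ring
    have e5 : 2 * G * σ ^ 2 / lam = 1 := by rw [hs]; field_simp
    rw [e3, e5, Real.log_one] at key
    linarith
end

section
/- Let (Ω, F, ℙ) carry real random variables w_x, w_y with mean 0, variance 1 and E[w_x w_y] = ρ. Fix reals A, B, C, D, Ā, C̄, λ > 0, x, y ∈ ℝ, and a symmetric real 2×2 matrix P with P₁₁ > 0 and B² + D² > 0. Define F₁₁ = (A² + C²) P₁₁, F₁₂ = F₂₁ = (A Ā + ρ C C̄) P₁₂, F₂₂ = (Ā² + C̄²) P₂₂, H = ((A B + C D) P₁₁, (Ā B + ρ C̄ D) P₂₁) ∈ ℝ², and G = (B² + D²) P₁₁ > 0. Then for every probability density π on ℝ with ∫u²π(u)du < ∞ and ∫π|ln π| < ∞, and every random variable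 u with density π independent of (w_x, w_y), setting X₁ = A x + B u + (C x + D u) w_x and Y₁ = Ā y + C̄ y w_y, one has E[(X₁, Y₁) P (X₁, Y₁)ᵀ] + λ ∫_ℝ π(u) ln π(u) du ≥ (x, y) (F − (1/G) H Hᵀ) (x, y)ᵀ + (λ/2) ln(G/(πλ)), with equality when π is the density of N(−(H·(x, y))/G, λ/(2G)). -/
open MeasureTheory ProbabilityTheory Matrix

/-- The density of the one-dimensional normal distribution `N(m, v)` (mean `m`,
variance `v`). -/
noncomputable def gaussianDensity (m v : ℝ) : ℝ → ℝ := fun u =>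
  (Real.sqrt (2 * Real.pi * v))⁻¹ * Real.exp (-(u - m) ^ 2 / (2 * v))

theorem h9_quad {Ω : Type*} [MeasurableSpace Ω] (μ : Measure Ω) [IsProbabilityMeasure μ]
    (wx wy : Ω → ℝ) (hwxm : Measurable wx) (hwym : Measurable wy)
    (hwx2 : Integrable (fun ω => wx ω ^ 2) μ) (hwy2 : Integrable (fun ω => wy ω ^ 2) μ)
    (hwx0 : ∫ ω, wx ω ∂μ = 0) (hwy0 : ∫ ω, wy ω ∂μ = 0)
    (hwxv : ∫ ω, wx ω ^ 2 ∂μ = 1) (hwyv : ∫ ω, wy ω ^ 2 ∂μ = 1)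
    (ρ : ℝ) (hρ : ∫ ω, wx ω * wy ω ∂μ = ρ) (f : Ω → ℝ) (c0 c1 c2 c3 c4 c5 : ℝ)
    (hf : ∀ ω, f ω = c0 + c1 * wx ω + c2 * wy ω + c3 * wx ω ^ 2 + c4 * (wx ω * wy ω)
      + c5 * wy ω ^ 2) :
    Integrable f μ ∧ ∫ ω, f ω ∂μ = c0 + c3 + c4 * ρ + c5 := by
  have lx : MemLp wx 2 μ := (memLp_two_iff_integrable_sq hwxm.aestronglyMeasurable).2 hwx2
  have ly : MemLp wy 2 μ := (memLp_two_iff_integrable_sq hwym.aestronglyMeasurable).2 hwy2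
  have i1 : Integrable wx μ := lx.integrable (by norm_num)
  have i2 : Integrable wy μ := ly.integrable (by norm_num)
  have i4 : Integrable (fun ω => wx ω * wy ω) μ := lx.integrable_mul ly
  have e : f = fun ω => c0 + c1 * wx ω + c2 * wy ω + c3 * wx ω ^ 2 + c4 * (wx ω * wy ω)
      + c5 * wy ω ^ 2 := funext hf
  have j0 : Integrable (fun _ : Ω => c0) μ := integrable_const _
  have j1 := i1.const_mul c1
  have j2 := i2.const_mul c2
  have j3 := hwx2.const_mul c3
  have j4 := i4.const_mul c4
  have j5 := hwy2.const_mul c5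
  have k1 : Integrable (fun ω => c0 + c1 * wx ω) μ := j0.add j1
  have k2 : Integrable (fun ω => c0 + c1 * wx ω + c2 * wy ω) μ := k1.add j2
  have k3 : Integrable (fun ω => c0 + c1 * wx ω + c2 * wy ω + c3 * wx ω ^ 2) μ := k2.add j3
  have k4 : Integrable (fun ω => c0 + c1 * wx ω + c2 * wy ω + c3 * wx ω ^ 2
    + c4 * (wx ω * wy ω)) μ := k3.add j4
  rw [e]
  refine ⟨k4.add j5, ?_⟩
  rw [integral_add k4 j5, integral_add k3 j4, integral_add k2 j3, integral_add k1 j2,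
    integral_add j0 j1]
  simp only [integral_const_mul, hwx0, hwy0, hwxv, hwyv, hρ]
  simp

theorem h9_law {Ω : Type*} [MeasurableSpace Ω] (μ : Measure Ω)
    (p : ℝ → ℝ) (hp : Measurable p) (hp0 : ∀ v, 0 ≤ p v) (u : Ω → ℝ) (hu : Measurable u)
    (hmap : Measure.map u μ = volume.withDensity (fun v => ENNReal.ofReal (p v)))
    (g : ℝ → ℝ) (hg : Measurable g) (hi : Integrable (fun v => g v * p v)) :
    Integrable (fun ω => g (u ω)) μ ∧ ∫ ω, g (u ω) ∂μ = ∫ v, g v * p v := by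
  constructor
  · have : Integrable g (Measure.map u μ) := by
      rw [hmap, integrable_withDensity_iff hp.ennreal_ofReal (by simp)]
      simpa [ENNReal.toReal_ofReal, hp0] using hi
    exact this.comp_measurable hu
  · rw [← integral_map hu.aemeasurable hg.aestronglyMeasurable, hmap,
      integral_withDensity_eq_integral_toReal_smul hp.ennreal_ofReal (by simp)]
    refine integral_congr_ae (Filter.Eventually.of_forall fun v => ?_)
    simp [ENNReal.toReal_ofReal, hp0, mul_comm]

theorem h9_gibbs (p : ℝ → ℝ) (hp0 : ∀ v, 0 ≤ p v)
    (hp1 : ∫ v, p v = 1) (hpi : Integrable p)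
    (m lam G : ℝ) (hlam : 0 < lam) (hG : 0 < G)
    (hsq : Integrable (fun v => (v - m) ^ 2 * p v))
    (hent : Integrable (fun v => p v * Real.log (p v))) :
    ((lam / 2) * Real.log (G / (Real.pi * lam)) ≤
      G * (∫ v, (v - m) ^ 2 * p v) + lam * ∫ v, p v * Real.log (p v)) ∧
    (p = gaussianDensity m (lam / (2 * G)) →
      G * (∫ v, (v - m) ^ 2 * p v) + lam * ∫ v, p v * Real.log (p v) =
      (lam / 2) * Real.log (G / (Real.pi * lam))) := by
  have hv : 0 < lam / (2 * G) := by positivity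
  set q := gaussianDensity m (lam / (2 * G)) with hq
  have hqe : q = gaussianPDFReal m ⟨lam / (2 * G), hv.le⟩ := by
    ext v
    simp only [hq, gaussianDensity, gaussianPDFReal]
    rfl
  have hqi : Integrable q := by rw [hqe]; exact integrable_gaussianPDFReal _ _
  have hq1 : ∫ v, q v = 1 := by
    rw [hqe]
    refine integral_gaussianPDFReal_eq_one _ ?_
    intro h
    have := congrArg NNReal.toReal h
    simp only [NNReal.coe_zero] at this
    exact hv.ne' this
  have hqpos : ∀ v, 0 < q v := by
    intro v
    have := Real.pi_pos
    simp only [hq, gaussianDensity]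
    positivity
  have hlogq : ∀ v, Real.log (q v) =
      (1 / 2) * Real.log (G / (Real.pi * lam)) - G / lam * (v - m) ^ 2 := by
    intro v
    have hpi := Real.pi_pos
    simp only [hq, gaussianDensity]
    rw [Real.log_mul (by positivity) (by positivity), Real.log_exp, Real.log_inv,
      Real.log_sqrt (by positivity)]
    have : G / (Real.pi * lam) = (2 * Real.pi * (lam / (2 * G)))⁻¹ := by field_simp
    rw [this, Real.log_inv]
    field_simp
    ring
  have hpq : (fun v => p v * Real.log (q v)) = fun v =>
      (1 / 2) * Real.log (G / (Real.pi * lam)) * p v - G / lam * ((v - m) ^ 2 * p v) := by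
    ext v; rw [hlogq]; ring
  have hpqi : Integrable (fun v => p v * Real.log (q v)) := by
    rw [hpq]; exact (hpi.const_mul _).sub (hsq.const_mul _)
  have hpqv : lam * ∫ v, p v * Real.log (q v) =
      (lam / 2) * Real.log (G / (Real.pi * lam)) - G * ∫ v, (v - m) ^ 2 * p v := by
    rw [hpq, integral_sub (hpi.const_mul _) (hsq.const_mul _), integral_const_mul,
      integral_const_mul, hp1]
    field_simp
  constructor
  · have key : ∫ v, (p v - q v) ≤ ∫ v, (p v * Real.log (p v) - p v * Real.log (q v)) := by
      refine integral_mono (hpi.sub hqi) (hent.sub hpqi) fun v => ?_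
      show p v - q v ≤ p v * Real.log (p v) - p v * Real.log (q v)
      rcases (hp0 v).eq_or_lt with h | h
      · rw [← h]; simp [(hqpos v).le]
      · have h1 := Real.log_le_sub_one_of_pos (div_pos (hqpos v) h)
        rw [Real.log_div (hqpos v).ne' h.ne'] at h1
        have h2 := mul_le_mul_of_nonneg_left h1 h.le
        have h3 : p v * (q v / p v - 1) = q v - p v := by field_simp
        rw [h3] at h2
        linarith
    rw [integral_sub hpi hqi, integral_sub hent hpqi, hp1, hq1, sub_self] at key
    have := mul_nonneg hlam.le key
    rw [mul_sub] at this
    linarith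
  · intro h
    rw [← h] at hpqv
    linarith

/-- One-step Bellman verification for the exploratory LQ problem (scalar control):
with `F`, `H`, `G` built from the symmetric matrix `P` as in the Riccati step, every
admissible control density `p` (and control `u` with density `p` independent of the
noises) satisfies
`E[(X₁,Y₁)P(X₁,Y₁)ᵀ] + λ∫p ln p ≥ (x,y)(F − (1/G)HHᵀ)(x,y)ᵀ + (λ/2)ln(G/(πλ))`,
with equality when `p` is the density of `N(−(H·(x,y))/G, λ/(2G))`. -/
theorem stmt_9 {Ω : Type*} [MeasurableSpace Ω] (μ : Measure Ω) [IsProbabilityMeasure μ]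
    (wx wy : Ω → ℝ) (hwxm : Measurable wx) (hwym : Measurable wy)
    (hwx2 : Integrable (fun ω => wx ω ^ 2) μ) (hwy2 : Integrable (fun ω => wy ω ^ 2) μ)
    (hwx0 : ∫ ω, wx ω ∂μ = 0) (hwy0 : ∫ ω, wy ω ∂μ = 0)
    (hwxv : ∫ ω, wx ω ^ 2 ∂μ = 1) (hwyv : ∫ ω, wy ω ^ 2 ∂μ = 1)
    (ρ : ℝ) (hρ : ∫ ω, wx ω * wy ω ∂μ = ρ)
    (A B C D Abar Cbar lam x y : ℝ) (hlam : 0 < lam)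
    (P : Matrix (Fin 2) (Fin 2) ℝ) (hPsymm : P.IsSymm)
    (hP11 : 0 < P 0 0) (hBD : 0 < B ^ 2 + D ^ 2)
    (F : Matrix (Fin 2) (Fin 2) ℝ)
    (hF : F = !![(A ^ 2 + C ^ 2) * P 0 0, (A * Abar + ρ * C * Cbar) * P 0 1;
                 (A * Abar + ρ * C * Cbar) * P 0 1, (Abar ^ 2 + Cbar ^ 2) * P 1 1])
    (H : Fin 2 → ℝ)
    (hH : H = ![(A * B + C * D) * P 0 0, (Abar * B + ρ * Cbar * D) * P 1 0])
    (G : ℝ) (hG : G = (B ^ 2 + D ^ 2) * P 0 0) :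
    ∀ p : ℝ → ℝ, Measurable p → (∀ v, 0 ≤ p v) → (∫ v, p v) = 1 →
      Integrable (fun v => v ^ 2 * p v) →
      Integrable (fun v => p v * |Real.log (p v)|) →
      ∀ u : Ω → ℝ, Measurable u →
        Measure.map u μ = volume.withDensity (fun v => ENNReal.ofReal (p v)) →
        IndepFun u (fun ω => (wx ω, wy ω)) μ →
        ((∫ ω, ![A * x + B * u ω + (C * x + D * u ω) * wx ω,
                 Abar * y + Cbar * y * wy ω] ⬝ᵥ
              (P *ᵥ ![A * x + B * u ω + (C * x + D * u ω) * wx ω,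
                      Abar * y + Cbar * y * wy ω]) ∂μ)
            + lam * ∫ v, p v * Real.log (p v)
          ≥ ![x, y] ⬝ᵥ ((F - (1 / G) • vecMulVec H H) *ᵥ ![x, y])
            + (lam / 2) * Real.log (G / (Real.pi * lam)))
        ∧ (p = gaussianDensity (-(H ⬝ᵥ ![x, y]) / G) (lam / (2 * G)) →
            (∫ ω, ![A * x + B * u ω + (C * x + D * u ω) * wx ω,
                    Abar * y + Cbar * y * wy ω] ⬝ᵥ
                (P *ᵥ ![A * x + B * u ω + (C * x + D * u ω) * wx ω,
                        Abar * y + Cbar * y * wy ω]) ∂μ)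
              + lam * ∫ v, p v * Real.log (p v)
            = ![x, y] ⬝ᵥ ((F - (1 / G) • vecMulVec H H) *ᵥ ![x, y])
              + (lam / 2) * Real.log (G / (Real.pi * lam))) := by
  intro p hp hp0 hp1 hp2 hpl u hu hmap hind
  have hGpos : 0 < G := by rw [hG]; positivity
  have hpi : Integrable p := by
    by_contra h
    rw [integral_undef h] at hp1
    exact zero_ne_one hp1
  have hent : Integrable (fun v => p v * Real.log (p v)) := by
    refine hpl.mono' (hp.mul (Real.measurable_log.comp hp)).aestronglyMeasurable ?_
    refine Filter.Eventually.of_forall fun v => ?_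
    rw [Real.norm_eq_abs, abs_mul, abs_of_nonneg (hp0 v)]
  have hpv : Integrable (fun v => v * p v) := by
    refine (hpi.add hp2).mono' (measurable_id.mul hp).aestronglyMeasurable ?_
    refine Filter.Eventually.of_forall fun v => ?_
    rw [Real.norm_eq_abs, abs_mul, abs_of_nonneg (hp0 v)]
    show |v| * p v ≤ p v + v ^ 2 * p v
    have : |v| ≤ 1 + v ^ 2 := by
      rw [← sq_abs]; nlinarith [sq_nonneg (|v| - 1), abs_nonneg v]
    nlinarith [mul_le_mul_of_nonneg_right this (hp0 v)]
  obtain ⟨iu1, eu1⟩ := h9_law μ p hp hp0 u hu hmap (fun v => v) measurable_id hpv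
  obtain ⟨iu2, eu2⟩ := h9_law μ p hp hp0 u hu hmap (fun v => v ^ 2) (by fun_prop) hp2
  set m1 := ∫ v, v * p v with hm1
  set m2 := ∫ v, v ^ 2 * p v with hm2
  have hs : P 1 0 = P 0 1 := hPsymm.apply 0 1
  -- coefficients of the integrand as a polynomial in the control
  let a : ℝ × ℝ → ℝ := fun w => P 0 0 * (A * x + C * x * w.1) ^ 2
    + 2 * P 0 1 * (A * x + C * x * w.1) * (Abar * y + Cbar * y * w.2)
    + P 1 1 * (Abar * y + Cbar * y * w.2) ^ 2
  let b : ℝ × ℝ → ℝ := fun w => 2 * P 0 0 * (A * x + C * x * w.1) * (B + D * w.1)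
    + 2 * P 0 1 * (B + D * w.1) * (Abar * y + Cbar * y * w.2)
  let c : ℝ × ℝ → ℝ := fun w => P 0 0 * (B + D * w.1) ^ 2
  obtain ⟨ia, ea⟩ := h9_quad μ wx wy hwxm hwym hwx2 hwy2 hwx0 hwy0 hwxv hwyv ρ hρ
    (fun ω => a (wx ω, wy ω))
    (P 0 0 * (A * x) ^ 2 + 2 * P 0 1 * (A * x) * (Abar * y) + P 1 1 * (Abar * y) ^ 2)
    (2 * P 0 0 * (A * x) * (C * x) + 2 * P 0 1 * (C * x) * (Abar * y))
    (2 * P 0 1 * (A * x) * (Cbar * y) + 2 * P 1 1 * (Abar * y) * (Cbar * y))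
    (P 0 0 * (C * x) ^ 2) (2 * P 0 1 * (C * x) * (Cbar * y)) (P 1 1 * (Cbar * y) ^ 2)
    (fun ω => by simp only [a]; ring)
  obtain ⟨ib, eb⟩ := h9_quad μ wx wy hwxm hwym hwx2 hwy2 hwx0 hwy0 hwxv hwyv ρ hρ
    (fun ω => b (wx ω, wy ω))
    (2 * P 0 0 * (A * x) * B + 2 * P 0 1 * B * (Abar * y))
    (2 * P 0 0 * (A * x) * D + 2 * P 0 0 * (C * x) * B + 2 * P 0 1 * D * (Abar * y))
    (2 * P 0 1 * B * (Cbar * y))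
    (2 * P 0 0 * (C * x) * D) (2 * P 0 1 * D * (Cbar * y)) 0
    (fun ω => by simp only [b]; ring)
  obtain ⟨ic, ec⟩ := h9_quad μ wx wy hwxm hwym hwx2 hwy2 hwx0 hwy0 hwxv hwyv ρ hρ
    (fun ω => c (wx ω, wy ω))
    (P 0 0 * B ^ 2) (2 * P 0 0 * B * D) 0 (P 0 0 * D ^ 2) 0 0
    (fun ω => by simp only [c]; ring)
  have indb : IndepFun u (fun ω => b (wx ω, wy ω)) μ :=
    hind.comp measurable_id (show Measurable b by fun_prop)
  have indc : IndepFun (fun ω => u ω ^ 2) (fun ω => c (wx ω, wy ω)) μ :=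
    hind.comp (show Measurable (fun v : ℝ => v ^ 2) by fun_prop) (show Measurable c by fun_prop)
  have iub : Integrable (fun ω => u ω * b (wx ω, wy ω)) μ := indb.integrable_mul iu1 ib
  have iuc : Integrable (fun ω => u ω ^ 2 * c (wx ω, wy ω)) μ := indc.integrable_mul iu2 ic
  have eub : ∫ ω, u ω * b (wx ω, wy ω) ∂μ = m1 * ∫ ω, b (wx ω, wy ω) ∂μ := by
    rw [← eu1]
    exact indb.integral_fun_mul_eq_mul_integral iu1.aestronglyMeasurable ib.aestronglyMeasurable
  have euc : ∫ ω, u ω ^ 2 * c (wx ω, wy ω) ∂μ = m2 * ∫ ω, c (wx ω, wy ω) ∂μ := by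
    rw [← eu2]
    exact indc.integral_fun_mul_eq_mul_integral iu2.aestronglyMeasurable ic.aestronglyMeasurable
  have hE : (∫ ω, ![A * x + B * u ω + (C * x + D * u ω) * wx ω,
                 Abar * y + Cbar * y * wy ω] ⬝ᵥ
              (P *ᵥ ![A * x + B * u ω + (C * x + D * u ω) * wx ω,
                      Abar * y + Cbar * y * wy ω]) ∂μ)
      = ![x, y] ⬝ᵥ (F *ᵥ ![x, y]) + 2 * (H ⬝ᵥ ![x, y]) * m1 + G * m2 := by
    have e1 : ∀ ω, ![A * x + B * u ω + (C * x + D * u ω) * wx ω,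
                 Abar * y + Cbar * y * wy ω] ⬝ᵥ
              (P *ᵥ ![A * x + B * u ω + (C * x + D * u ω) * wx ω,
                      Abar * y + Cbar * y * wy ω])
        = a (wx ω, wy ω) + u ω * b (wx ω, wy ω) + u ω ^ 2 * c (wx ω, wy ω) := by
      intro ω
      simp [Matrix.mulVec, dotProduct, Fin.sum_univ_two, hs, a, b, c]
      ring
    simp_rw [e1]
    have iab : Integrable (fun ω => a (wx ω, wy ω) + u ω * b (wx ω, wy ω)) μ := ia.add iub
    rw [integral_add iab iuc, integral_add ia iub, eub, euc, ea, eb, ec, hF, hH, hG]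
    simp [Matrix.mulVec, dotProduct, Fin.sum_univ_two, hs]
    ring
  set h := H ⬝ᵥ ![x, y] with hh
  have hR : ![x, y] ⬝ᵥ ((F - (1 / G) • vecMulVec H H) *ᵥ ![x, y])
      = ![x, y] ⬝ᵥ (F *ᵥ ![x, y]) - h ^ 2 / G := by
    rw [hh]
    simp [Matrix.mulVec, dotProduct, Fin.sum_univ_two, vecMulVec_apply]
    field_simp
    ring
  have esq : (fun v => (v - (-h / G)) ^ 2 * p v) =
      fun v => v ^ 2 * p v + 2 * h / G * (v * p v) + h ^ 2 / G ^ 2 * p v := by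
    ext v; field_simp; ring
  have k1 : Integrable (fun v => v ^ 2 * p v + 2 * h / G * (v * p v)) :=
    hp2.add (hpv.const_mul _)
  have hsq : Integrable (fun v => (v - (-h / G)) ^ 2 * p v) := by
    rw [esq]; exact k1.add (hpi.const_mul _)
  have vsq : G * ∫ v, (v - (-h / G)) ^ 2 * p v = G * m2 + 2 * h * m1 + h ^ 2 / G := by
    rw [esq, integral_add k1 (hpi.const_mul _), integral_add hp2 (hpv.const_mul _),
      integral_const_mul, integral_const_mul, hp1, ← hm1, ← hm2]
    field_simp
  obtain ⟨g1, g2⟩ := h9_gibbs p hp0 hp1 hpi (-h / G) lam G hlam hGpos hsq hent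
  rw [hE, hR]
  rw [vsq] at g1 g2
  constructor
  · linarith
  · intro hpe
    have := g2 hpe
    linarith
end

section
/- In the backward Riccati recursion context, for every t with 0 ≤ t ≤ T one has (P_t)₁₁ = r^{T−t}, and for every t with 0 ≤ t ≤ T−1 one has G_t = (B² + D²) r^{T−t−1}. -/
open Matrix

/-- In the backward Riccati recursion `P_T = [[1,−1],[−1,1]]`,
`P_t = F_t − (1/G_t) H_t H_tᵀ` (with `F_t`, `H_t`, `G_t` built from `P_{t+1}`),
one has `(P_t)₁₁ = r^{T−t}` for all `0 ≤ t ≤ T` and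
`G_t = (B² + D²) r^{T−t−1}` for all `0 ≤ t ≤ T−1`, where
`r = A² + C² − (AB + CD)²/(B² + D²) > 0`. -/
theorem stmt_10 (T : ℕ) (A B C D Abar Cbar ρ r : ℝ)
    (hBD : 0 < B ^ 2 + D ^ 2)
    (hr : r = A ^ 2 + C ^ 2 - (A * B + C * D) ^ 2 / (B ^ 2 + D ^ 2))
    (hrpos : 0 < r)
    (P : ℕ → Matrix (Fin 2) (Fin 2) ℝ)
    (hPT : P T = !![1, -1; -1, 1])
    (hrec : ∀ t, t < T →
      P t = !![(A ^ 2 + C ^ 2) * P (t + 1) 0 0,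
               (A * Abar + C * Cbar) * P (t + 1) 0 1;
               (A * Abar + C * Cbar) * P (t + 1) 0 1,
               (Abar ^ 2 + Cbar ^ 2) * P (t + 1) 1 1]
            - (1 / ((B ^ 2 + D ^ 2) * P (t + 1) 0 0)) •
                vecMulVec
                  ![(A * B + C * D) * P (t + 1) 0 0,
                    (Abar * B + ρ * Cbar * D) * P (t + 1) 1 0]
                  ![(A * B + C * D) * P (t + 1) 0 0,
                    (Abar * B + ρ * Cbar * D) * P (t + 1) 1 0]) :
    (∀ t, t ≤ T → P t 0 0 = r ^ (T - t))
    ∧ (∀ t, t < T →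
        (B ^ 2 + D ^ 2) * P (t + 1) 0 0 = (B ^ 2 + D ^ 2) * r ^ (T - t - 1)) := by
  have key : ∀ k t, t + k = T → P t 0 0 = r ^ k := by
    intro k
    induction k with
    | zero =>
      intro t ht
      have h : t = T := by omega
      subst h
      simp [hPT]
    | succ k ih =>
      intro t ht
      have h1 := ih (t + 1) (by omega)
      have hp : r ^ k ≠ 0 := (pow_pos hrpos k).ne'
      have hb : B ^ 2 + D ^ 2 ≠ 0 := hBD.ne'
      have h2 := congrFun (congrFun (hrec t (by omega)) 0) 0
      simp only [Matrix.sub_apply, Matrix.smul_apply, vecMulVec_apply, Matrix.of_apply,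
        Matrix.cons_val_zero, smul_eq_mul, h1] at h2
      rw [h2, pow_succ r k]
      generalize r ^ k = x at hp ⊢
      rw [hr]
      field_simp
  refine ⟨fun t ht => key _ t (by omega), fun t ht => ?_⟩
  rw [key (T - t - 1) (t + 1) (by omega)]
end

section
/- In the backward Riccati recursion context, for every t with 0 ≤ t ≤ T one has (P_t)₁₂ = (P_t)₂₁ = −q^{T−t}. -/
open Matrix

/-- In the backward Riccati recursion `P_T = [[1,−1],[−1,1]]`,
`P_t = F_t − (1/G_t) H_t H_tᵀ`, the off-diagonal entries satisfy
`(P_t)₁₂ = (P_t)₂₁ = −q^{T−t}` for all `0 ≤ t ≤ T`, where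
`q = AĀ + CC̄ − (ĀB + ρC̄D)(AB + CD)/(B² + D²)`. -/
theorem stmt_11 (T : ℕ) (A B C D Abar Cbar ρ r q : ℝ)
    (hBD : 0 < B ^ 2 + D ^ 2)
    (hr : r = A ^ 2 + C ^ 2 - (A * B + C * D) ^ 2 / (B ^ 2 + D ^ 2))
    (hrpos : 0 < r)
    (hq : q = A * Abar + C * Cbar
            - (Abar * B + ρ * Cbar * D) * (A * B + C * D) / (B ^ 2 + D ^ 2))
    (P : ℕ → Matrix (Fin 2) (Fin 2) ℝ)
    (hPT : P T = !![1, -1; -1, 1])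
    (hrec : ∀ t, t < T →
      P t = !![(A ^ 2 + C ^ 2) * P (t + 1) 0 0,
               (A * Abar + C * Cbar) * P (t + 1) 0 1;
               (A * Abar + C * Cbar) * P (t + 1) 0 1,
               (Abar ^ 2 + Cbar ^ 2) * P (t + 1) 1 1]
            - (1 / ((B ^ 2 + D ^ 2) * P (t + 1) 0 0)) •
                vecMulVec
                  ![(A * B + C * D) * P (t + 1) 0 0,
                    (Abar * B + ρ * Cbar * D) * P (t + 1) 1 0]
                  ![(A * B + C * D) * P (t + 1) 0 0,
                    (Abar * B + ρ * Cbar * D) * P (t + 1) 1 0]) :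
    ∀ t, t ≤ T → P t 0 1 = -q ^ (T - t) ∧ P t 1 0 = -q ^ (T - t) := by
  have key : ∀ k, k ≤ T → 0 < P (T - k) 0 0 ∧ P (T - k) 0 1 = -q ^ k ∧
      P (T - k) 1 0 = -q ^ k := by
    intro k
    induction k with
    | zero => intro _; simp [hPT]
    | succ k ih =>
      intro hk
      obtain ⟨h0, h1, h2⟩ := ih (by omega)
      have h := hrec (T - (k + 1)) (by omega)
      have e : T - (k + 1) + 1 = T - k := by omega
      rw [e] at h
      have hne : B ^ 2 + D ^ 2 ≠ 0 := hBD.ne'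
      have h0ne := h0.ne'
      have a00 : P (T - (k + 1)) 0 0 = r * P (T - k) 0 0 := by
        rw [h, hr]
        simp [-one_div]
        field_simp
      have a01 : P (T - (k + 1)) 0 1 = -q ^ (k + 1) := by
        rw [h, pow_succ, hq]
        simp [-one_div]
        rw [h1, h2, ← hq]
        have : q * (B ^ 2 + D ^ 2) = (A * Abar + C * Cbar) * (B ^ 2 + D ^ 2)
            - (Abar * B + ρ * Cbar * D) * (A * B + C * D) := by
          rw [hq]; field_simp
        field_simp
        linear_combination q ^ k * this
      have a10 : P (T - (k + 1)) 1 0 = P (T - (k + 1)) 0 1 := by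
        rw [h]
        simp [-one_div]
        ring_nf
        simp
      exact ⟨a00 ▸ mul_pos hrpos h0, a01, a10.trans a01⟩
  intro t ht
  have := key (T - t) (by omega)
  rw [show T - (T - t) = t by omega] at this
  exact this.2
end

section
/- In the backward Riccati recursion context, for every t with 0 ≤ t ≤ T one has (P_t)₂₂ = ā^{T−t} − Σ_{j=t}^{T−1} (q²/r)^{T−j−1} · s · ā^{j−t}. -/
open Matrix

/-- In the backward Riccati recursion `P_T = [[1,−1],[−1,1]]`,
`P_t = F_t − (1/G_t) H_t H_tᵀ`, the lower-right entry satisfies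
`(P_t)₂₂ = ā^{T−t} − Σ_{j=t}^{T−1} (q²/r)^{T−j−1} · s · ā^{j−t}` for all `0 ≤ t ≤ T`,
where `r, q, s, ā` are as in Theorem 2. -/
theorem stmt_12 (T : ℕ) (A B C D Abar Cbar ρ r q s abar : ℝ)
    (hBD : 0 < B ^ 2 + D ^ 2)
    (hr : r = A ^ 2 + C ^ 2 - (A * B + C * D) ^ 2 / (B ^ 2 + D ^ 2))
    (hrpos : 0 < r)
    (hq : q = A * Abar + C * Cbar
            - (Abar * B + ρ * Cbar * D) * (A * B + C * D) / (B ^ 2 + D ^ 2))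
    (hs : s = (Abar * B + ρ * Cbar * D) ^ 2 / (B ^ 2 + D ^ 2))
    (habar : abar = Abar ^ 2 + Cbar ^ 2)
    (P : ℕ → Matrix (Fin 2) (Fin 2) ℝ)
    (hPT : P T = !![1, -1; -1, 1])
    (hrec : ∀ t, t < T →
      P t = !![(A ^ 2 + C ^ 2) * P (t + 1) 0 0,
               (A * Abar + C * Cbar) * P (t + 1) 0 1;
               (A * Abar + C * Cbar) * P (t + 1) 0 1,
               (Abar ^ 2 + Cbar ^ 2) * P (t + 1) 1 1]
            - (1 / ((B ^ 2 + D ^ 2) * P (t + 1) 0 0)) •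
                vecMulVec
                  ![(A * B + C * D) * P (t + 1) 0 0,
                    (Abar * B + ρ * Cbar * D) * P (t + 1) 1 0]
                  ![(A * B + C * D) * P (t + 1) 0 0,
                    (Abar * B + ρ * Cbar * D) * P (t + 1) 1 0]) :
    ∀ t, t ≤ T →
      P t 1 1 = abar ^ (T - t)
        - ∑ j ∈ Finset.Ico t T, (q ^ 2 / r) ^ (T - j - 1) * s * abar ^ (j - t) := by
  have key : ∀ n t, t + n = T → P t 0 0 = r ^ n ∧ P t 0 1 = -q ^ n ∧ P t 1 0 = -q ^ n ∧
      P t 1 1 = abar ^ (T - t)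
        - ∑ j ∈ Finset.Ico t T, (q ^ 2 / r) ^ (T - j - 1) * s * abar ^ (j - t) := by
    intro n
    induction n with
    | zero =>
      intro t ht
      obtain rfl : t = T := by omega
      simp [hPT]
    | succ n ih =>
      intro t ht
      obtain ⟨h00, h01, h10, h11⟩ := ih (t + 1) (by omega)
      have hlt : t < T := by omega
      have hR : r ^ n ≠ 0 := (pow_pos hrpos n).ne'
      have hK : B ^ 2 + D ^ 2 ≠ 0 := hBD.ne'
      have hP := hrec t hlt
      rw [h00, h01, h10] at hP
      have e11 : P t 1 1 = abar * P (t + 1) 1 1 - (q ^ 2 / r) ^ n * s := by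
        rw [hP, habar, hs, div_pow, ← pow_mul, mul_comm 2 n, pow_mul]
        simp
        field_simp
      refine ⟨?_, ?_, ?_, ?_⟩
      · rw [hP, pow_succ r n]
        generalize r ^ n = R at hR ⊢
        rw [hr]
        simp
        field_simp
      · rw [hP, pow_succ q n]
        generalize r ^ n = R at hR ⊢
        generalize q ^ n = Q
        rw [hq]
        simp
        field_simp
        ring
      · rw [hP, pow_succ q n]
        generalize r ^ n = R at hR ⊢
        generalize q ^ n = Q
        rw [hq]
        simp
        field_simp
        ring
      · rw [e11, h11, Finset.sum_eq_sum_Ico_succ_bot hlt, mul_sub, Finset.mul_sum]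
        have e1 : T - t = (T - (t + 1)) + 1 := by omega
        have e2 : T - t - 1 = n := by omega
        have e3 : ∑ j ∈ Finset.Ico (t + 1) T,
              abar * ((q ^ 2 / r) ^ (T - j - 1) * s * abar ^ (j - (t + 1)))
            = ∑ j ∈ Finset.Ico (t + 1) T, (q ^ 2 / r) ^ (T - j - 1) * s * abar ^ (j - t) := by
          refine Finset.sum_congr rfl fun j hj => ?_
          have hj1 := (Finset.mem_Ico.mp hj).1
          have e4 : j - t = (j - (t + 1)) + 1 := by omega
          rw [e4, pow_succ]
          ring
        rw [e3, e2, e1, pow_succ]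
        simp
        ring
  intro t ht
  exact (key (T - t) t (by omega)).2.2.2
end

section
/- In the backward Riccati recursion context, for every t with 0 ≤ t ≤ T−1 the optimal feedback coefficient vector satisfies (1/G_t) H_t = ((AB + CD)/(B² + D²), −(q/r)^{T−t−1} (ĀB + ρC̄D)/(B² + D²)); in particular the ratio g_t := (P_{t+1})₂₁/(P_{t+1})₁₁ equals −(q/r)^{T−t−1}. -/
open Matrix

/-- In the backward Riccati recursion, the optimal feedback coefficient vector satisfies
`(1/G_t) H_t = ((AB + CD)/(B² + D²), −(q/r)^{T−t−1}(ĀB + ρC̄D)/(B² + D²))` for every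
`0 ≤ t ≤ T−1`; in particular `g_t := (P_{t+1})₂₁/(P_{t+1})₁₁ = −(q/r)^{T−t−1}`. -/
theorem stmt_13 (T : ℕ) (A B C D Abar Cbar ρ r q : ℝ)
    (hBD : 0 < B ^ 2 + D ^ 2)
    (hr : r = A ^ 2 + C ^ 2 - (A * B + C * D) ^ 2 / (B ^ 2 + D ^ 2))
    (hrpos : 0 < r)
    (hq : q = A * Abar + C * Cbar
            - (Abar * B + ρ * Cbar * D) * (A * B + C * D) / (B ^ 2 + D ^ 2))
    (P : ℕ → Matrix (Fin 2) (Fin 2) ℝ)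
    (hPT : P T = !![1, -1; -1, 1])
    (hrec : ∀ t, t < T →
      P t = !![(A ^ 2 + C ^ 2) * P (t + 1) 0 0,
               (A * Abar + C * Cbar) * P (t + 1) 0 1;
               (A * Abar + C * Cbar) * P (t + 1) 0 1,
               (Abar ^ 2 + Cbar ^ 2) * P (t + 1) 1 1]
            - (1 / ((B ^ 2 + D ^ 2) * P (t + 1) 0 0)) •
                vecMulVec
                  ![(A * B + C * D) * P (t + 1) 0 0,
                    (Abar * B + ρ * Cbar * D) * P (t + 1) 1 0]
                  ![(A * B + C * D) * P (t + 1) 0 0,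
                    (Abar * B + ρ * Cbar * D) * P (t + 1) 1 0]) :
    ∀ t, t < T →
      ((1 / ((B ^ 2 + D ^ 2) * P (t + 1) 0 0)) •
          ![(A * B + C * D) * P (t + 1) 0 0,
            (Abar * B + ρ * Cbar * D) * P (t + 1) 1 0]
        = ![(A * B + C * D) / (B ^ 2 + D ^ 2),
            -(q / r) ^ (T - t - 1) * (Abar * B + ρ * Cbar * D) / (B ^ 2 + D ^ 2)])
      ∧ P (t + 1) 1 0 / P (t + 1) 0 0 = -(q / r) ^ (T - t - 1) := by
  have key : ∀ k t, t + k = T → P t 0 0 = r ^ k ∧ P t 0 1 = -q ^ k ∧ P t 1 0 = -q ^ k := by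
    intro k
    induction k with
    | zero =>
      intro t ht
      have ht' : t = T := by omega
      subst ht'
      rw [hPT]
      simp
    | succ k ih =>
      intro t ht
      obtain ⟨h1, h2, h3⟩ := ih (t + 1) (by omega)
      have hk : r ^ k ≠ 0 := (pow_pos hrpos k).ne'
      have hb := hBD.ne'
      have h := hrec t (by omega)
      rw [h1, h2, h3] at h
      rw [h, pow_succ r k, pow_succ q k]
      generalize r ^ k = x at hk ⊢
      generalize q ^ k = y
      subst hr hq
      refine ⟨?_, ?_, ?_⟩
      all_goals
        simp [vecMulVec_apply]
        field_simp
        try ring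
  intro t ht
  obtain ⟨h1, h2, h3⟩ := key (T - t - 1) (t + 1) (by omega)
  have hk : r ^ (T - t - 1) ≠ 0 := (pow_pos hrpos _).ne'
  have hb := hBD.ne'
  rw [h1, h3, div_pow]
  generalize r ^ (T - t - 1) = x at hk ⊢
  generalize q ^ (T - t - 1) = y
  refine ⟨?_, by ring⟩
  ext i
  fin_cases i
  all_goals
    simp
    field_simp
end

section
/- In the backward Riccati recursion context, for every t with 0 ≤ t ≤ T−1 and every λ > 0, (λ/2) Σ_{k=t}^{T−1} ln(G_k/(πλ)) = (λ/2)(T−t) ln(1/(πλ)) + (λ/2)(T−t) ln(B² + D²) + (λ/4)(T−t−1)(T−t) ln r, where π denotes the constant pi. -/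
open Matrix

/-- Exploration-cost constant of Theorem 2: in the backward Riccati recursion, for every
`0 ≤ t ≤ T−1` and `λ > 0`,
`(λ/2) Σ_{k=t}^{T−1} ln(G_k/(πλ)) = (λ/2)(T−t)ln(1/(πλ)) + (λ/2)(T−t)ln(B²+D²)
  + (λ/4)(T−t−1)(T−t) ln r`. -/
theorem stmt_14 (T : ℕ) (A B C D Abar Cbar ρ r : ℝ)
    (hBD : 0 < B ^ 2 + D ^ 2)
    (hr : r = A ^ 2 + C ^ 2 - (A * B + C * D) ^ 2 / (B ^ 2 + D ^ 2))
    (hrpos : 0 < r)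
    (P : ℕ → Matrix (Fin 2) (Fin 2) ℝ)
    (hPT : P T = !![1, -1; -1, 1])
    (hrec : ∀ t, t < T →
      P t = !![(A ^ 2 + C ^ 2) * P (t + 1) 0 0,
               (A * Abar + C * Cbar) * P (t + 1) 0 1;
               (A * Abar + C * Cbar) * P (t + 1) 0 1,
               (Abar ^ 2 + Cbar ^ 2) * P (t + 1) 1 1]
            - (1 / ((B ^ 2 + D ^ 2) * P (t + 1) 0 0)) •
                vecMulVec
                  ![(A * B + C * D) * P (t + 1) 0 0,
                    (Abar * B + ρ * Cbar * D) * P (t + 1) 1 0]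
                  ![(A * B + C * D) * P (t + 1) 0 0,
                    (Abar * B + ρ * Cbar * D) * P (t + 1) 1 0]) :
    ∀ t, t < T → ∀ lam : ℝ, 0 < lam →
      (lam / 2) * ∑ k ∈ Finset.Ico t T,
          Real.log (((B ^ 2 + D ^ 2) * P (k + 1) 0 0) / (Real.pi * lam))
        = (lam / 2) * ((T - t : ℕ) : ℝ) * Real.log (1 / (Real.pi * lam))
          + (lam / 2) * ((T - t : ℕ) : ℝ) * Real.log (B ^ 2 + D ^ 2)
          + (lam / 4) * ((T - t - 1 : ℕ) : ℝ) * ((T - t : ℕ) : ℝ) * Real.log r := by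
  have hP : ∀ n, n ≤ T → P (T - n) 0 0 = r ^ n := by
    intro n
    induction n with
    | zero => intro _; simp [hPT]
    | succ n ih =>
      intro hn
      have h1 := ih (by omega)
      have h2 := hrec (T - (n + 1)) (by omega)
      have h3 : T - (n + 1) + 1 = T - n := by omega
      rw [h3] at h2
      have h4 := congrFun (congrFun h2 0) 0
      simp [h1] at h4
      have hrn : r ^ n ≠ 0 := (pow_pos hrpos n).ne'
      rw [h4, pow_succ r n]
      generalize r ^ n = q at *
      rw [hr]
      have := hBD.ne'
      field_simp
  intro t ht lam hlam
  have hpl : Real.pi * lam ≠ 0 := (mul_pos Real.pi_pos hlam).ne'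
  have key : ∀ n, n ≤ T → ∑ k ∈ Finset.Ico (T - n) T,
      Real.log (((B ^ 2 + D ^ 2) * P (k + 1) 0 0) / (Real.pi * lam))
      = n * Real.log (1 / (Real.pi * lam)) + n * Real.log (B ^ 2 + D ^ 2)
        + ((n : ℝ) - 1) * n / 2 * Real.log r := by
    intro n
    induction n with
    | zero => intro _; simp
    | succ n ih =>
      intro hn
      have h3 : T - (n + 1) + 1 = T - n := by omega
      rw [Finset.sum_eq_sum_Ico_succ_bot (by omega), h3, ih (by omega), hP n (by omega),
        div_eq_mul_one_div, Real.log_mul (mul_pos hBD (pow_pos hrpos n)).ne'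
          (one_div_ne_zero hpl), Real.log_mul hBD.ne' (pow_pos hrpos n).ne', Real.log_pow]
      push_cast
      ring
  have h := key (T - t) (by omega)
  rw [show T - (T - t) = t by omega] at h
  rw [h, Nat.cast_sub (show 1 ≤ T - t by omega)]
  push_cast
  ring
end

section
/- Assume C = 0, A ≠ 0, D ≠ 0 and B² + D² > 0, so that r = A²D²/(B² + D²) > 0, and let λ > 0. Define V(t, x, y) = (x, y) P_t (x, y)ᵀ + (λ/2) Σ_{k=t}^{T−1} ln(G_k/(πλ)) for 0 ≤ t ≤ T and (x, y) ∈ ℝ². Then V(T, x, y) = (x − y)², and for every t < T, every (x, y) ∈ ℝ², every probability density π on ℝ with ∫u²π(u)du < ∞ and ∫π|ln π| < ∞, and every random variable u with density π independent of the noise pair (w_x, w_y), setting X₁ = A x + B u + D u w_x and Y₁ = Ā y + C̄ y w_y one has E[V(t+1, X₁, Y₁)] + λ ∫_ℝ π(u) ln π(u) du ≥ V(t, x, y), with equality when π is the density of N(−(H_t · (x, y))/G_t, λ/(2G_t)). -/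
open MeasureTheory ProbabilityTheory Matrix

theorem aux_expect {Ω : Type*} [MeasurableSpace Ω] (μ : Measure Ω) [IsProbabilityMeasure μ]
    (wx wy : Ω → ℝ) (hwxm : Measurable wx) (hwym : Measurable wy)
    (hwx2 : Integrable (fun ω => wx ω ^ 2) μ) (hwy2 : Integrable (fun ω => wy ω ^ 2) μ)
    (hwx0 : ∫ ω, wx ω ∂μ = 0) (hwy0 : ∫ ω, wy ω ∂μ = 0)
    (hwxv : ∫ ω, wx ω ^ 2 ∂μ = 1) (hwyv : ∫ ω, wy ω ^ 2 ∂μ = 1)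
    (ρ : ℝ) (hρ : ∫ ω, wx ω * wy ω ∂μ = ρ)
    (u : Ω → ℝ) (hu : Measurable u) (hu2 : Integrable (fun ω => u ω ^ 2) μ)
    (hind : IndepFun u (fun ω => (wx ω, wy ω)) μ)
    (c0 c1 c2 c3 c4 c5 c6 c7 c8 c9 : ℝ) :
    ∫ ω, (c0 + c1 * u ω + c2 * u ω ^ 2 + c3 * (u ω * wx ω) + c4 * (u ω ^ 2 * wx ω)
      + c5 * (u ω ^ 2 * wx ω ^ 2) + c6 * wy ω + c7 * (u ω * wy ω)
      + c8 * (u ω * (wx ω * wy ω)) + c9 * wy ω ^ 2) ∂μ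
    = c0 + c1 * (∫ ω, u ω ∂μ) + (c2 + c5) * (∫ ω, u ω ^ 2 ∂μ)
      + c8 * ρ * (∫ ω, u ω ∂μ) + c9 := by
  have Lu : MemLp u 2 μ := (memLp_two_iff_integrable_sq hu.aestronglyMeasurable).2 hu2
  have Lx : MemLp wx 2 μ := (memLp_two_iff_integrable_sq hwxm.aestronglyMeasurable).2 hwx2
  have Ly : MemLp wy 2 μ := (memLp_two_iff_integrable_sq hwym.aestronglyMeasurable).2 hwy2
  have Iu : Integrable u μ := Lu.integrable one_le_two
  have Ix : Integrable wx μ := Lx.integrable one_le_two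
  have Iy : Integrable wy μ := Ly.integrable one_le_two
  have Ixy : Integrable (fun ω => wx ω * wy ω) μ := Lx.integrable_mul Ly
  have i3 : IndepFun u wx μ := hind.comp measurable_id measurable_fst
  have i4 : IndepFun (fun ω => u ω ^ 2) wx μ :=
    hind.comp (φ := fun v : ℝ => v ^ 2) (by fun_prop) measurable_fst
  have i5 : IndepFun (fun ω => u ω ^ 2) (fun ω => wx ω ^ 2) μ :=
    hind.comp (φ := fun v : ℝ => v ^ 2) (ψ := fun q : ℝ × ℝ => q.1 ^ 2) (by fun_prop) (by fun_prop)
  have i7 : IndepFun u wy μ := hind.comp measurable_id measurable_snd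
  have i8 : IndepFun u (fun ω => wx ω * wy ω) μ :=
    hind.comp (ψ := fun q : ℝ × ℝ => q.1 * q.2) measurable_id (by fun_prop)
  have J3 : Integrable (fun ω => u ω * wx ω) μ := i3.integrable_mul Iu Ix
  have J4 : Integrable (fun ω => u ω ^ 2 * wx ω) μ := i4.integrable_mul hu2 Ix
  have J5 : Integrable (fun ω => u ω ^ 2 * wx ω ^ 2) μ := i5.integrable_mul hu2 hwx2
  have J7 : Integrable (fun ω => u ω * wy ω) μ := i7.integrable_mul Iu Iy
  have J8 : Integrable (fun ω => u ω * (wx ω * wy ω)) μ := i8.integrable_mul Iu Ixy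
  have e3 : ∫ ω, u ω * wx ω ∂μ = 0 := by
    rw [i3.integral_fun_mul_eq_mul_integral Iu.1 Ix.1, hwx0, mul_zero]
  have e4 : ∫ ω, u ω ^ 2 * wx ω ∂μ = 0 := by
    rw [i4.integral_fun_mul_eq_mul_integral hu2.1 Ix.1, hwx0, mul_zero]
  have e5 : ∫ ω, u ω ^ 2 * wx ω ^ 2 ∂μ = ∫ ω, u ω ^ 2 ∂μ := by
    rw [i5.integral_fun_mul_eq_mul_integral hu2.1 hwx2.1, hwxv, mul_one]
  have e7 : ∫ ω, u ω * wy ω ∂μ = 0 := by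
    rw [i7.integral_fun_mul_eq_mul_integral Iu.1 Iy.1, hwy0, mul_zero]
  have e8 : ∫ ω, u ω * (wx ω * wy ω) ∂μ = (∫ ω, u ω ∂μ) * ρ := by
    rw [i8.integral_fun_mul_eq_mul_integral Iu.1 Ixy.1, hρ]
  rw [integral_add (by fun_prop) (by fun_prop), integral_add (by fun_prop) (by fun_prop),
    integral_add (by fun_prop) (by fun_prop), integral_add (by fun_prop) (by fun_prop),
    integral_add (by fun_prop) (by fun_prop), integral_add (by fun_prop) (by fun_prop),
    integral_add (by fun_prop) (by fun_prop), integral_add (by fun_prop) (by fun_prop),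
    integral_add (by fun_prop) (by fun_prop)]
  simp only [integral_const_mul, e3, e4, e5, e7, e8, hwy0, hwyv, integral_const]
  simp
  ring

theorem aux_gibbs (p : ℝ → ℝ) (hp : Measurable p) (hp0 : ∀ v, 0 ≤ p v) (hp1 : (∫ v, p v) = 1)
    (h2 : Integrable (fun v => v ^ 2 * p v))
    (hl : Integrable (fun v => p v * |Real.log (p v)|)) (G lam m : ℝ) (hG : 0 < G)
    (hlam : 0 < lam) :
    (lam / 2 * Real.log (G / (Real.pi * lam)) ≤ lam * (∫ v, p v * Real.log (p v))
      + G * ((∫ v, v ^ 2 * p v) - 2 * m * (∫ v, v * p v) + m ^ 2)) ∧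
    (p = gaussianDensity m (lam / (2 * G)) →
      lam * (∫ v, p v * Real.log (p v))
      + G * ((∫ v, v ^ 2 * p v) - 2 * m * (∫ v, v * p v) + m ^ 2)
      = lam / 2 * Real.log (G / (Real.pi * lam))) := by
  have I0 : Integrable p := by
    by_contra h
    rw [integral_undef h] at hp1
    norm_num at hp1
  have I1 : Integrable (fun v => v * p v) := by
    refine (I0.add h2).mono (by fun_prop) (Filter.Eventually.of_forall fun v => ?_)
    have := hp0 v
    simp only [Pi.add_apply, Real.norm_eq_abs]
    have h3 : 0 ≤ p v + v ^ 2 * p v := by positivity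
    rw [abs_mul, abs_of_nonneg (hp0 v), abs_of_nonneg h3]
    nlinarith [sq_nonneg (|v| - 1), sq_abs v, abs_nonneg v]
  have Il : Integrable (fun v => p v * Real.log (p v)) := by
    refine hl.mono (by fun_prop) (Filter.Eventually.of_forall fun v => ?_)
    simp
  have hv : 0 < lam / (2 * G) := by positivity
  have hpi := Real.pi_pos
  set q := gaussianDensity m (lam / (2 * G)) with hq
  have hqe : q = gaussianPDFReal m ⟨lam / (2 * G), hv.le⟩ := by
    funext v
    simp [hq, gaussianDensity, gaussianPDFReal]
    rfl
  have Iq : Integrable q := by rw [hqe]; exact integrable_gaussianPDFReal _ _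
  have q1 : ∫ v, q v = 1 := by
    rw [hqe]
    exact integral_gaussianPDFReal_eq_one _ (fun h => hv.ne' (congrArg NNReal.toReal h))
  have qpos : ∀ v, 0 < q v := by
    intro v
    simp only [hq, gaussianDensity]
    positivity
  have qlog : ∀ v, Real.log (q v) = 1 / 2 * Real.log (G / (Real.pi * lam))
      - G / lam * (v ^ 2 - 2 * m * v + m ^ 2) := by
    intro v
    simp only [hq, gaussianDensity]
    rw [Real.log_mul (by positivity) (by positivity), Real.log_exp, Real.log_inv,
      Real.log_sqrt (by positivity)]
    have : G / (Real.pi * lam) = (2 * Real.pi * (lam / (2 * G)))⁻¹ := by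
      field_simp
    rw [this, Real.log_inv]
    field_simp
    ring
  have epq : ∫ v, p v * Real.log (q v) = 1 / 2 * Real.log (G / (Real.pi * lam))
      - G / lam * ((∫ v, v ^ 2 * p v) - 2 * m * (∫ v, v * p v) + m ^ 2) := by
    have : (fun v => p v * Real.log (q v)) = fun v =>
        (1 / 2 * Real.log (G / (Real.pi * lam)) - G / lam * m ^ 2) * p v
        + (-(G / lam)) * (v ^ 2 * p v) + (G / lam * (2 * m)) * (v * p v) := by
      funext v
      rw [qlog]
      ring
    rw [this, integral_add (by fun_prop) (by fun_prop), integral_add (by fun_prop) (by fun_prop)]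
    simp only [integral_const_mul, hp1]
    ring
  have Ipq : Integrable (fun v => p v * Real.log (q v)) := by
    have : (fun v => p v * Real.log (q v)) = fun v =>
        (1 / 2 * Real.log (G / (Real.pi * lam)) - G / lam * m ^ 2) * p v
        + (-(G / lam)) * (v ^ 2 * p v) + (G / lam * (2 * m)) * (v * p v) := by
      funext v
      rw [qlog]
      ring
    rw [this]
    fun_prop
  have key : lam * (1 / 2 * Real.log (G / (Real.pi * lam))
      - G / lam * ((∫ v, v ^ 2 * p v) - 2 * m * (∫ v, v * p v) + m ^ 2))
      = lam / 2 * Real.log (G / (Real.pi * lam))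
      - G * ((∫ v, v ^ 2 * p v) - 2 * m * (∫ v, v * p v) + m ^ 2) := by
    field_simp
  constructor
  · have hle : ∫ v, (p v * Real.log (q v) + (p v - q v)) ≤ ∫ v, p v * Real.log (p v) := by
      refine integral_mono (Ipq.add (I0.sub Iq)) Il fun v => ?_
      have hqv := qpos v
      rcases (hp0 v).eq_or_lt with h | h
      · simp only [← h]
        simp
        exact hqv.le
      · have h1 := Real.log_le_sub_one_of_pos (div_pos hqv h)
        rw [Real.log_div hqv.ne' h.ne'] at h1
        have h2 := mul_le_mul_of_nonneg_left h1 h.le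
        have h3 : p v * (q v / p v - 1) = q v - p v := by field_simp
        simp only
        nlinarith
    rw [integral_add Ipq (show Integrable (fun v => p v - q v) from I0.sub Iq), integral_sub I0 Iq, q1, hp1, epq] at hle
    have := mul_le_mul_of_nonneg_left hle hlam.le
    linarith
  · intro hpq
    have e : ∫ v, p v * Real.log (p v) = ∫ v, p v * Real.log (q v) := by
      congr 1
      funext v
      rw [hpq]
    rw [e, epq, key]
    ring

/-- Dynamic-programming verification (case `C = 0`): with
`V(t,x,y) = (x,y)P_t(x,y)ᵀ + (λ/2)Σ_{k=t}^{T−1} ln(G_k/(πλ))`, one has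
`V(T,x,y) = (x−y)²`, and for every `t < T` the exploratory Bellman inequality
`E[V(t+1, X₁, Y₁)] + λ∫p ln p ≥ V(t,x,y)` holds for every admissible control density
`p` and control `u` with density `p` independent of the noises, with equality when `p`
is the Gaussian density `N(−(H_t·(x,y))/G_t, λ/(2G_t))`. -/
theorem stmt_15 {Ω : Type*} [MeasurableSpace Ω] (μ : Measure Ω) [IsProbabilityMeasure μ]
    (wx wy : Ω → ℝ) (hwxm : Measurable wx) (hwym : Measurable wy)
    (hwx2 : Integrable (fun ω => wx ω ^ 2) μ) (hwy2 : Integrable (fun ω => wy ω ^ 2) μ)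
    (hwx0 : ∫ ω, wx ω ∂μ = 0) (hwy0 : ∫ ω, wy ω ∂μ = 0)
    (hwxv : ∫ ω, wx ω ^ 2 ∂μ = 1) (hwyv : ∫ ω, wy ω ^ 2 ∂μ = 1)
    (ρ : ℝ) (hρ : ∫ ω, wx ω * wy ω ∂μ = ρ)
    (T : ℕ) (A B D Abar Cbar lam : ℝ)
    (hA : A ≠ 0) (hD : D ≠ 0) (hBD : 0 < B ^ 2 + D ^ 2) (hlam : 0 < lam)
    (P : ℕ → Matrix (Fin 2) (Fin 2) ℝ)
    (hPT : P T = !![1, -1; -1, 1])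
    (hrec : ∀ t, t < T →
      P t = !![A ^ 2 * P (t + 1) 0 0, A * Abar * P (t + 1) 0 1;
               A * Abar * P (t + 1) 0 1, (Abar ^ 2 + Cbar ^ 2) * P (t + 1) 1 1]
            - (1 / ((B ^ 2 + D ^ 2) * P (t + 1) 0 0)) •
                vecMulVec
                  ![A * B * P (t + 1) 0 0, (Abar * B + ρ * Cbar * D) * P (t + 1) 1 0]
                  ![A * B * P (t + 1) 0 0, (Abar * B + ρ * Cbar * D) * P (t + 1) 1 0])
    (V : ℕ → ℝ → ℝ → ℝ)
    (hV : ∀ t x y, V t x y =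
      ![x, y] ⬝ᵥ (P t *ᵥ ![x, y])
        + (lam / 2) * ∑ k ∈ Finset.Ico t T,
            Real.log (((B ^ 2 + D ^ 2) * P (k + 1) 0 0) / (Real.pi * lam))) :
    (∀ x y : ℝ, V T x y = (x - y) ^ 2)
    ∧ ∀ t, t < T → ∀ x y : ℝ,
        ∀ p : ℝ → ℝ, Measurable p → (∀ v, 0 ≤ p v) → (∫ v, p v) = 1 →
          Integrable (fun v => v ^ 2 * p v) →
          Integrable (fun v => p v * |Real.log (p v)|) →
          ∀ u : Ω → ℝ, Measurable u →
            Measure.map u μ = volume.withDensity (fun v => ENNReal.ofReal (p v)) →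
            IndepFun u (fun ω => (wx ω, wy ω)) μ →
            ((∫ ω, V (t + 1) (A * x + B * u ω + D * u ω * wx ω)
                 (Abar * y + Cbar * y * wy ω) ∂μ)
                + lam * ∫ v, p v * Real.log (p v)
              ≥ V t x y)
            ∧ (p = gaussianDensity
                  (-(![A * B * P (t + 1) 0 0,
                      (Abar * B + ρ * Cbar * D) * P (t + 1) 1 0] ⬝ᵥ ![x, y])
                    / ((B ^ 2 + D ^ 2) * P (t + 1) 0 0))
                  (lam / (2 * ((B ^ 2 + D ^ 2) * P (t + 1) 0 0))) →
                (∫ ω, V (t + 1) (A * x + B * u ω + D * u ω * wx ω)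
                    (Abar * y + Cbar * y * wy ω) ∂μ)
                  + lam * ∫ v, p v * Real.log (p v)
                = V t x y) := by
  have hP : ∀ n, n ≤ T → 0 < P (T - n) 0 0 ∧ P (T - n) 0 1 = P (T - n) 1 0 := by
    intro n
    induction n with
    | zero => intro _; simp [hPT]
    | succ n ih =>
      intro hn
      obtain ⟨h1, h2⟩ := ih (by omega)
      have e : T - (n + 1) + 1 = T - n := by omega
      have h := hrec (T - (n + 1)) (by omega)
      rw [e] at h
      rw [h]
      constructor
      · simp
        have : A ^ 2 * P (T - n) 0 0 - (P (T - n) 0 0)⁻¹ * (B ^ 2 + D ^ 2)⁻¹ *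
            (A * B * P (T - n) 0 0 * (A * B * P (T - n) 0 0))
            = A ^ 2 * D ^ 2 * P (T - n) 0 0 / (B ^ 2 + D ^ 2) := by
          field_simp
          ring
        have h3 : 0 < A ^ 2 * D ^ 2 * P (T - n) 0 0 / (B ^ 2 + D ^ 2) := by positivity
        linarith
      · simp
        exact Or.inl (mul_comm _ _)
  refine ⟨fun x y => ?_, fun t ht x y p hp hp0 hp1 h2 hl u hu hmap hind => ?_⟩
  · rw [hV, hPT]
    simp [Matrix.mulVec, dotProduct, Fin.sum_univ_two]
    ring
  obtain ⟨ha, hs⟩ := hP (T - (t + 1)) (by omega)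
  rw [show T - (T - (t + 1)) = t + 1 by omega] at ha hs
  have hPt := hrec t ht
  have hG : 0 < (B ^ 2 + D ^ 2) * P (t + 1) 0 0 := by positivity
  have mom : ∀ f : ℝ → ℝ, Measurable f → ∫ ω, f (u ω) ∂μ = ∫ v, f v * p v := by
    intro f hf
    rw [← integral_map (f := f) hu.aemeasurable hf.aestronglyMeasurable, hmap,
      integral_withDensity_eq_integral_toReal_smul (by fun_prop) (by simp)]
    congr 1
    funext v
    simp [ENNReal.toReal_ofReal (hp0 v), mul_comm]
  have hu2 : Integrable (fun ω => u ω ^ 2) μ := by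
    have : Integrable (fun v : ℝ => v ^ 2) (Measure.map u μ) := by
      rw [hmap, integrable_withDensity_iff (by fun_prop) (by simp)]
      simpa [ENNReal.toReal_ofReal (hp0 _)] using h2
    exact this.comp_measurable hu
  have m1 := mom (fun v => v) measurable_id
  have m2 := mom (fun v => v ^ 2) (by fun_prop)
  set S := (lam / 2) * ∑ k ∈ Finset.Ico (t + 1) T,
            Real.log (((B ^ 2 + D ^ 2) * P (k + 1) 0 0) / (Real.pi * lam)) with hS
  set G := (B ^ 2 + D ^ 2) * P (t + 1) 0 0 with hGdef
  set a := P (t + 1) 0 0 with ha'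
  set b := P (t + 1) 1 0 with hb'
  set c := P (t + 1) 1 1 with hc'
  have hE : ∫ ω, V (t + 1) (A * x + B * u ω + D * u ω * wx ω)
      (Abar * y + Cbar * y * wy ω) ∂μ
      = S + a * (A ^ 2 * x ^ 2) + 2 * b * (A * x * (Abar * y)) + c * (Abar ^ 2 + Cbar ^ 2) * y ^ 2
        + 2 * (A * B * a * x + (Abar * B + ρ * Cbar * D) * b * y) * (∫ v, v * p v)
        + G * ∫ v, v ^ 2 * p v := by
    have hx := aux_expect μ wx wy hwxm hwym hwx2 hwy2 hwx0 hwy0 hwxv hwyv ρ hρ u hu hu2 hind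
      (S + a * (A ^ 2 * x ^ 2) + 2 * b * (A * x * (Abar * y)) + c * Abar ^ 2 * y ^ 2)
      (2 * a * A * x * B + 2 * b * B * Abar * y)
      (a * B ^ 2)
      (2 * a * A * x * D + 2 * b * D * Abar * y)
      (2 * a * B * D) (a * D ^ 2)
      (2 * b * A * x * Cbar * y + 2 * c * Abar * y * Cbar * y)
      (2 * b * B * Cbar * y) (2 * b * D * Cbar * y) (c * Cbar ^ 2 * y ^ 2)
    rw [m1, m2] at hx
    trans
    swap
    · trans
      · exact hx
      · rw [hGdef]; ring
    · congr 1
      funext ω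
      rw [hV]
      simp only [Matrix.mulVec, dotProduct, Fin.sum_univ_two, Matrix.cons_val_zero,
        Matrix.cons_val_one, hs, ← hS, ← ha', ← hb', ← hc']
      ring
  have hVt : V t x y = S + lam / 2 * Real.log (G / (Real.pi * lam))
      + a * (A ^ 2 * x ^ 2) + 2 * b * (A * x * (Abar * y)) + c * (Abar ^ 2 + Cbar ^ 2) * y ^ 2
      - (A * B * a * x + (Abar * B + ρ * Cbar * D) * b * y) ^ 2 / G := by
    rw [hV, hPt, Finset.sum_eq_sum_Ico_succ_bot ht, mul_add, ← hS, hs]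
    simp [Matrix.mulVec, dotProduct, Fin.sum_univ_two, vecMulVec_apply]
    ring
  have hdot : (![A * B * a, (Abar * B + ρ * Cbar * D) * b] ⬝ᵥ ![x, y])
      = A * B * a * x + (Abar * B + ρ * Cbar * D) * b * y := by
    simp [dotProduct, Fin.sum_univ_two]
  rw [hdot, hE, hVt]
  set h := A * B * a * x + (Abar * B + ρ * Cbar * D) * b * y with hh
  obtain ⟨g1, g2⟩ := aux_gibbs p hp hp0 hp1 h2 hl G lam (-h / G) hG hlam
  have hk : G * ((∫ v, v ^ 2 * p v) - 2 * (-h / G) * (∫ v, v * p v) + (-h / G) ^ 2)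
      = G * (∫ v, v ^ 2 * p v) + 2 * h * (∫ v, v * p v) + h ^ 2 / G := by
    field_simp
    ring
  rw [hk] at g1 g2
  constructor
  · linarith
  · intro hpq
    have := g2 hpq
    linarith
end

section
/- Assume C = 0, A ≠ 0, D ≠ 0 and B² + D² > 0. Then in the backward Riccati recursion context: q = AD(ĀD − ρBC̄)/(B² + D²) and r = A²D²/(B² + D²); consequently, for 0 ≤ t ≤ T, (P_t)₁₁ = (A²D²/(B² + D²))^{T−t}, (P_t)₁₂ = (P_t)₂₁ = −A^{T−t} (D(ĀD − ρBC̄)/(B² + D²))^{T−t}, and (P_t)₂₂ = (Ā² + C̄²)^{T−t} − Σ_{j=t}^{T−1} ((ĀD − ρBC̄)²/(B² + D²))^{T−j−1} · ((ĀB + ρC̄D)²/(B² + D²)) · (Ā² + C̄²)^{j−t}; and for 0 ≤ t ≤ T−1, G_t = (B² + D²)(A²D²/(B² + D²))^{T−t−1} and (1/G_t) H_t = (AB/(B² + D²), −((ĀD − ρBC̄)/(AD))^{T−t−1} (ĀB + ρC̄D)/(B² + D²)). -/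
open Matrix

/-- Proposition 1 (mean–variance asset-liability specialization, `C = 0`): in the
backward Riccati recursion with `A ≠ 0`, `D ≠ 0`, `B² + D² > 0`, one has
`q = AD(ĀD − ρBC̄)/(B² + D²)`, `r = A²D²/(B² + D²)`, the closed-form entries of `P_t`,
the closed form of `G_t`, and the closed-form optimal feedback vector `(1/G_t)H_t`. -/
theorem stmt_16 (T : ℕ) (A B D Abar Cbar ρ r q : ℝ)
    (hA : A ≠ 0) (hD : D ≠ 0) (hBD : 0 < B ^ 2 + D ^ 2)
    (hr : r = A ^ 2 - (A * B) ^ 2 / (B ^ 2 + D ^ 2))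
    (hq : q = A * Abar - (Abar * B + ρ * Cbar * D) * (A * B) / (B ^ 2 + D ^ 2))
    (P : ℕ → Matrix (Fin 2) (Fin 2) ℝ)
    (hPT : P T = !![1, -1; -1, 1])
    (hrec : ∀ t, t < T →
      P t = !![A ^ 2 * P (t + 1) 0 0, A * Abar * P (t + 1) 0 1;
               A * Abar * P (t + 1) 0 1, (Abar ^ 2 + Cbar ^ 2) * P (t + 1) 1 1]
            - (1 / ((B ^ 2 + D ^ 2) * P (t + 1) 0 0)) •
                vecMulVec
                  ![A * B * P (t + 1) 0 0, (Abar * B + ρ * Cbar * D) * P (t + 1) 1 0]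
                  ![A * B * P (t + 1) 0 0, (Abar * B + ρ * Cbar * D) * P (t + 1) 1 0]) :
    q = A * D * (Abar * D - ρ * B * Cbar) / (B ^ 2 + D ^ 2)
    ∧ r = A ^ 2 * D ^ 2 / (B ^ 2 + D ^ 2)
    ∧ (∀ t, t ≤ T →
        P t 0 0 = (A ^ 2 * D ^ 2 / (B ^ 2 + D ^ 2)) ^ (T - t)
        ∧ P t 0 1 = -A ^ (T - t)
            * (D * (Abar * D - ρ * B * Cbar) / (B ^ 2 + D ^ 2)) ^ (T - t)
        ∧ P t 1 0 = -A ^ (T - t)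
            * (D * (Abar * D - ρ * B * Cbar) / (B ^ 2 + D ^ 2)) ^ (T - t)
        ∧ P t 1 1 = (Abar ^ 2 + Cbar ^ 2) ^ (T - t)
            - ∑ j ∈ Finset.Ico t T,
                ((Abar * D - ρ * B * Cbar) ^ 2 / (B ^ 2 + D ^ 2)) ^ (T - j - 1)
                  * ((Abar * B + ρ * Cbar * D) ^ 2 / (B ^ 2 + D ^ 2))
                  * (Abar ^ 2 + Cbar ^ 2) ^ (j - t))
    ∧ (∀ t, t < T →
        (B ^ 2 + D ^ 2) * P (t + 1) 0 0
            = (B ^ 2 + D ^ 2) * (A ^ 2 * D ^ 2 / (B ^ 2 + D ^ 2)) ^ (T - t - 1)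
        ∧ (1 / ((B ^ 2 + D ^ 2) * P (t + 1) 0 0)) •
              ![A * B * P (t + 1) 0 0, (Abar * B + ρ * Cbar * D) * P (t + 1) 1 0]
            = ![A * B / (B ^ 2 + D ^ 2),
                -((Abar * D - ρ * B * Cbar) / (A * D)) ^ (T - t - 1)
                  * (Abar * B + ρ * Cbar * D) / (B ^ 2 + D ^ 2)]) := by
  obtain ⟨S, hS⟩ : ∃ S, S = B ^ 2 + D ^ 2 := ⟨_, rfl⟩
  obtain ⟨M, hM⟩ : ∃ M, M = Abar * D - ρ * B * Cbar := ⟨_, rfl⟩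
  obtain ⟨K, hK⟩ : ∃ K, K = Abar * B + ρ * Cbar * D := ⟨_, rfl⟩
  obtain ⟨L, hL⟩ : ∃ L, L = Abar ^ 2 + Cbar ^ 2 := ⟨_, rfl⟩
  simp only [← hS, ← hM, ← hK, ← hL] at hBD hr hq hrec ⊢
  have hS0 : S ≠ 0 := hBD.ne'
  have hr' : A ^ 2 - (A * B) ^ 2 / S = A ^ 2 * D ^ 2 / S := by
    field_simp
    rw [hS]; ring
  have hq' : A * Abar - K * (A * B) / S = A * D * M / S := by
    field_simp
    rw [hS, hK, hM]; ring
  have hr0 : A ^ 2 * D ^ 2 / S ≠ 0 := by positivity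
  have key : ∀ n t, t + n = T →
      P t 0 0 = (A ^ 2 * D ^ 2 / S) ^ n
      ∧ P t 0 1 = -(A * D * M / S) ^ n
      ∧ P t 1 0 = -(A * D * M / S) ^ n
      ∧ P t 1 1 = L ^ n - ∑ j ∈ Finset.Ico t T,
          (M ^ 2 / S) ^ (T - j - 1) * (K ^ 2 / S) * L ^ (j - t) := by
    intro n
    induction n with
    | zero =>
      intro t ht
      have : t = T := by omega
      subst this
      simp [hPT]
    | succ n ih =>
      intro t ht
      obtain ⟨h00, h01, h10, h11⟩ := ih (t + 1) (by omega)
      have hR := hrec t (by omega)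
      have hp : (A ^ 2 * D ^ 2 / S) ^ n ≠ 0 := pow_ne_zero _ hr0
      have hsq : ((A * D * M / S) ^ n) ^ 2 = (M ^ 2 / S) ^ n * (A ^ 2 * D ^ 2 / S) ^ n := by
        rw [← pow_mul, mul_comm n 2, pow_mul, ← mul_pow]
        congr 1
        field_simp
      rw [h00, h01, h10, h11] at hR
      have hsum : ∑ j ∈ Finset.Ico t T,
          (M ^ 2 / S) ^ (T - j - 1) * (K ^ 2 / S) * L ^ (j - t)
          = (M ^ 2 / S) ^ n * (K ^ 2 / S) + L * ∑ j ∈ Finset.Ico (t + 1) T,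
          (M ^ 2 / S) ^ (T - j - 1) * (K ^ 2 / S) * L ^ (j - (t + 1)) := by
        rw [Finset.sum_eq_sum_Ico_succ_bot (by omega), Finset.mul_sum]
        congr 1
        · have : T - t - 1 = n := by omega
          simp [this]
        · refine Finset.sum_congr rfl fun j hj => ?_
          have := (Finset.mem_Ico.mp hj).1
          have : j - t = (j - (t + 1)) + 1 := by omega
          rw [this]; ring
      rw [hsum]
      rw [pow_succ (A ^ 2 * D ^ 2 / S), pow_succ (A * D * M / S), ← hr', ← hq']
      rw [← hr', ← hq'] at hsq
      rw [← hr'] at hp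
      rw [← hr', ← hq'] at hR
      generalize (A ^ 2 - (A * B) ^ 2 / S) ^ n = p at hp hsq hR ⊢
      generalize (A * Abar - K * (A * B) / S) ^ n = u at hsq hR ⊢
      generalize (M ^ 2 / S) ^ n = v at hsq ⊢
      rw [hR]
      refine ⟨?_, ?_, ?_, ?_⟩
      · simp [vecMulVec_apply]
        field_simp
      · simp [vecMulVec_apply]
        field_simp
        ring
      · simp [vecMulVec_apply]
        field_simp
        ring
      · have e : 1 / (S * p) * (K * -u * (K * -u)) = v * (K ^ 2 / S) := by
          have : K * -u * (K * -u) = K ^ 2 * (v * p) := by rw [← hsq]; ring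
          rw [this]
          field_simp
        simp only [Matrix.sub_apply, Matrix.smul_apply, vecMulVec_apply, smul_eq_mul, of_apply, cons_val_one,
          cons_val_fin_one, e]
        ring
  refine ⟨by rw [hq, hq'], by rw [hr, hr'], fun t ht => ?_, fun t ht => ?_⟩
  · obtain ⟨h00, h01, h10, h11⟩ := key (T - t) t (by omega)
    have e : -(A * D * M / S) ^ (T - t) = -A ^ (T - t) * (D * M / S) ^ (T - t) := by
      rw [neg_mul, ← mul_pow]
      congr 2
      ring
    exact ⟨h00, h01.trans e, h10.trans e, h11⟩
  · obtain ⟨h00, h01, h10, h11⟩ := key (T - t - 1) (t + 1) (by omega)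
    have hp : (A ^ 2 * D ^ 2 / S) ^ (T - t - 1) ≠ 0 := pow_ne_zero _ hr0
    have e : (A * D * M / S) ^ (T - t - 1)
        = (M / (A * D)) ^ (T - t - 1) * (A ^ 2 * D ^ 2 / S) ^ (T - t - 1) := by
      rw [← mul_pow]
      congr 1
      field_simp
    rw [h00, h10, e]
    refine ⟨rfl, ?_⟩
    generalize (A ^ 2 * D ^ 2 / S) ^ (T - t - 1) = p at hp ⊢
    generalize (M / (A * D)) ^ (T - t - 1) = w
    ext i
    fin_cases i
    · simp
      field_simp
    · simp
      field_simp
end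

section
/- Let λ > 0, G > 0, h, k ∈ ℝ² and F a symmetric real 2×2 matrix. For every z ∈ ℝ² and every σ > 0, zᵀ F z − (h·z)²/G + (λ/2) ln(G/(πλ)) ≤ zᵀ F z + 2 (h·z)(k·z) + G ((k·z)² + σ²) − (λ/2) ln(2πσ²) − λ/2; that is, replacing any Gaussian linear feedback policy with mean k·z and variance σ² by the Gaussian policy with mean −(h·z)/G and variance λ/(2G) never increases the one-step entropy-regularized value. -/
open Matrix

/-- One-step policy improvement inequality: replacing a Gaussian linear feedback policy
with mean `k·z` and variance `σ²` by the Gaussian policy with mean `−(h·z)/G` and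
variance `λ/(2G)` never increases the one-step entropy-regularized value:
`zᵀFz − (h·z)²/G + (λ/2)ln(G/(πλ)) ≤ zᵀFz + 2(h·z)(k·z) + G((k·z)² + σ²)
  − (λ/2)ln(2πσ²) − λ/2`. -/
theorem stmt_19 (lam G : ℝ) (hlam : 0 < lam) (hG : 0 < G)
    (h k : Fin 2 → ℝ) (F : Matrix (Fin 2) (Fin 2) ℝ) (hF : F.IsSymm) :
    ∀ (z : Fin 2 → ℝ) (σ : ℝ), 0 < σ →
      z ⬝ᵥ (F *ᵥ z) - (h ⬝ᵥ z) ^ 2 / G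
          + (lam / 2) * Real.log (G / (Real.pi * lam))
        ≤ z ⬝ᵥ (F *ᵥ z) + 2 * (h ⬝ᵥ z) * (k ⬝ᵥ z) + G * ((k ⬝ᵥ z) ^ 2 + σ ^ 2)
          - (lam / 2) * Real.log (2 * Real.pi * σ ^ 2) - lam / 2 := by
  intro z σ hσ
  have hpi := Real.pi_pos
  have h1 : Real.log (G / (Real.pi * lam)) + Real.log (2 * Real.pi * σ ^ 2)
      ≤ 2 * G * σ ^ 2 / lam - 1 := by
    rw [← Real.log_mul (by positivity) (by positivity)]
    have e : G / (Real.pi * lam) * (2 * Real.pi * σ ^ 2) = 2 * G * σ ^ 2 / lam := by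
      field_simp
    rw [e]
    exact Real.log_le_sub_one_of_pos (by positivity)
  have h2 := mul_le_mul_of_nonneg_left h1 (by positivity : 0 ≤ lam / 2)
  have h3 : lam / 2 * (2 * G * σ ^ 2 / lam - 1) = G * σ ^ 2 - lam / 2 := by
    field_simp
  have h4 : 0 ≤ G * (k ⬝ᵥ z + h ⬝ᵥ z / G) ^ 2 := by positivity
  have h5 : G * (k ⬝ᵥ z + h ⬝ᵥ z / G) ^ 2
      = 2 * (h ⬝ᵥ z) * (k ⬝ᵥ z) + G * (k ⬝ᵥ z) ^ 2 + (h ⬝ᵥ z) ^ 2 / G := by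
    field_simp
    ring
  linarith
end
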